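/- arXiv:1601.05906 — 4 statements merged into one kernel-verified Lean document; each statement's English description precedes it below -/
import Mathlib

section
/- Let n ≥ 2 and p, q ≥ 1 with p + q = n, and let λ ∈ sl_n(ℂ) be the diagonal traceless matrix whose first p diagonal entries equal q and whose last q diagonal entries equal −p. Let C = {t·g·λ·g⁻¹ : t ∈ ℂ∖{0}, g ∈ GL_n(ℂ)} and let 𝔭_u ⊆ sl_n(ℂ) be the space of block matrices [[0, B],[0, 0]] with B an arbitrary p×q complex matrix. Then the Zariski closure of C in sl_n(ℂ) equals {g·(t·λ + N)·g⁻¹ : t ∈ ℂ, N ∈ 𝔭_u, g ∈ GL_n(ℂ)}, and this set also equals C ∪ {X ∈ sl_n(ℂ) : X² = 0 and rank X ≤ min(p, q)}. -/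
open Matrix

noncomputable section

abbrev Mat (n : ℕ) := Matrix (Fin n) (Fin n) ℂ

/-- A subset of the space of `n×n` complex matrices is Zariski closed if it is the
common zero locus of a family of polynomials in the matrix entries. -/
def zclosed {n : ℕ} (S : Set (Mat n)) : Prop :=
  ∃ T : Set (MvPolynomial (Fin n × Fin n) ℂ),
    S = {X | ∀ p ∈ T, MvPolynomial.eval (fun q => X q.1 q.2) p = 0}

/-- The Zariski closure of a set of matrices. -/
def zclosure {n : ℕ} (S : Set (Mat n)) : Set (Mat n) :=
  ⋂₀ {C | zclosed C ∧ S ⊆ C}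

/-- Evaluation of polynomials in the matrix entries at `X`. -/
def evX {n : ℕ} (X : Mat n) : MvPolynomial (Fin n × Fin n) ℂ →+* ℂ :=
  MvPolynomial.eval (fun q => X q.1 q.2)

/-- The generic matrix. -/
abbrev gX (n : ℕ) : Matrix (Fin n) (Fin n) (MvPolynomial (Fin n × Fin n) ℂ) :=
  mvPolynomialX (Fin n) (Fin n) ℂ

theorem gX_map {n : ℕ} (X : Mat n) : (gX n).map (evX X) = X := by
  ext i j
  simp [evX]

theorem evX_gX {n : ℕ} (X : Mat n) (i j : Fin n) : evX X (gX n i j) = X i j := by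
  simp [evX]

theorem evX_C {n : ℕ} (X : Mat n) (c : ℂ) : evX X (MvPolynomial.C c) = c := by
  simp [evX]

theorem mem_zclosure {n : ℕ} (S : Set (Mat n)) (X : Mat n) :
    X ∈ zclosure S ↔ ∀ f : MvPolynomial (Fin n × Fin n) ℂ,
      (∀ Y ∈ S, evX Y f = 0) → evX X f = 0 := by
  constructor
  · intro h f hf
    have := h {Y | ∀ p ∈ ({f} : Set (MvPolynomial (Fin n × Fin n) ℂ)),
      MvPolynomial.eval (fun q => Y q.1 q.2) p = 0} ⟨⟨_, rfl⟩, by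
        intro Y hY p hp
        rw [Set.mem_singleton_iff] at hp
        subst hp
        exact hf Y hY⟩
    exact this f rfl
  · rintro h D ⟨⟨T, rfl⟩, hSD⟩ f hf
    exact h f (fun Y hY => hSD hY f hf)

theorem subset_zclosure {n : ℕ} (S : Set (Mat n)) : S ⊆ zclosure S := by
  rintro X hX D ⟨_, hD⟩
  exact hD hX

/-- Submodules of intermediate dimension. -/
theorem exists_between_submodule {V : Type*} [AddCommGroup V] [Module ℂ V]
    [FiniteDimensional ℂ V] (A B : Submodule ℂ V) (hAB : A ≤ B) (p : ℕ)
    (h1 : Module.finrank ℂ A ≤ p) (h2 : p ≤ Module.finrank ℂ B) :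
    ∃ W : Submodule ℂ V, A ≤ W ∧ W ≤ B ∧ Module.finrank ℂ W = p := by
  induction p, h1 using Nat.le_induction with
  | base => exact ⟨A, le_rfl, hAB, rfl⟩
  | succ k hk ih =>
    obtain ⟨W, hAW, hWB, hW⟩ := ih (by omega)
    have hlt : W < B := lt_of_le_of_ne hWB (by rintro rfl; omega)
    obtain ⟨v, hvB, hvW⟩ := SetLike.exists_of_lt hlt
    refine ⟨W ⊔ Submodule.span ℂ {v}, hAW.trans le_sup_left, sup_le hWB ?_, ?_⟩
    · rw [Submodule.span_singleton_le_iff_mem]; exact hvB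
    · have hv : v ≠ 0 := by rintro rfl; exact hvW W.zero_mem
      have hdis : W ⊓ Submodule.span ℂ {v} = ⊥ := by
        rw [← disjoint_iff]
        exact (Submodule.disjoint_span_singleton' hv).2 hvW
      have := Submodule.finrank_sup_add_finrank_inf_eq W (Submodule.span ℂ {v})
      rw [hdis, finrank_bot, finrank_span_singleton hv] at this
      omega

/-- A matrix adapted to a decomposition. -/
theorem exists_adapted {n p q : ℕ} (hpq : p + q = n) (W W' : Submodule ℂ (Fin n → ℂ))
    (hc : IsCompl W W') (hW : Module.finrank ℂ W = p) :
    ∃ g : Matrix.GeneralLinearGroup (Fin n) ℂ, ∀ j : Fin n,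
      (((j : ℕ) < p → (g : Mat n).col j ∈ W) ∧ (¬ (j : ℕ) < p → (g : Mat n).col j ∈ W')) ∧
      ∀ v ∈ W, ¬ (j : ℕ) < p → ((↑g⁻¹ : Mat n) *ᵥ v) j = 0 := by
  have hW' : Module.finrank ℂ W' = q := by
    have := Submodule.finrank_add_eq_of_isCompl hc
    simp at this
    omega
  let b1 := Module.finBasisOfFinrankEq ℂ W hW
  let b2 := Module.finBasisOfFinrankEq ℂ W' hW'
  let e : Fin p ⊕ Fin q ≃ Fin n := finSumFinEquiv.trans (finCongr hpq)
  let b : Module.Basis (Fin n) ℂ (Fin n → ℂ) :=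
    ((b1.prod b2).map (Submodule.prodEquivOfIsCompl W W' hc)).reindex e
  let M : Mat n := Matrix.of fun i j => b j i
  let M' : Mat n := Matrix.of fun i j => b.repr (Pi.single j 1) i
  have hM'v : ∀ v, M' *ᵥ v = b.repr v := by
    intro v
    ext i
    conv_rhs => rw [pi_eq_sum_univ' v]
    simp [M', Matrix.mulVec, dotProduct, mul_comm]
  have hM'M : M' * M = 1 := by
    ext i j
    have : (M' * M) i j = (M' *ᵥ (b j)) i := rfl
    rw [this, hM'v]
    simp [Matrix.one_apply, Finsupp.single_apply, eq_comm]
  have hMM' : M * M' = 1 := mul_eq_one_comm.1 hM'M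
  have hb1 : ∀ i : Fin p, b (e (Sum.inl i)) = b1 i := by intro i; simp [b]
  have hb2 : ∀ i : Fin q, b (e (Sum.inr i)) = b2 i := by intro i; simp [b]
  refine ⟨⟨M, M', hMM', hM'M⟩, fun j => ?_⟩
  obtain ⟨j, rfl⟩ := e.surjective j
  rcases j with j | j
  · have hlt : ((e (Sum.inl j) : Fin n) : ℕ) < p := by simp [e]
    refine ⟨⟨fun _ => ?_, fun h => absurd hlt h⟩, fun _ _ h => absurd hlt h⟩
    change b (e (Sum.inl j)) ∈ W
    rw [hb1]; exact (b1 j).2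
  · have hlt : ¬ ((e (Sum.inr j) : Fin n) : ℕ) < p := by simp [e]
    refine ⟨⟨fun h => absurd h hlt, fun _ => ?_⟩, fun v hv _ => ?_⟩
    · change b (e (Sum.inr j)) ∈ W'
      rw [hb2]; exact (b2 j).2
    · change (M' *ᵥ v) _ = 0
      rw [hM'v]
      have := Submodule.prodEquivOfIsCompl_symm_apply_left W W' hc ⟨v, hv⟩
      simp [b, this]

/-- Square-zero matrices of small rank. -/
theorem nilp_conj {n p q : ℕ} (hpq : p + q = n) (X : Mat n) (hX : X * X = 0)
    (hr : X.rank ≤ min p q) :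
    ∃ (N : Mat n) (g : Matrix.GeneralLinearGroup (Fin n) ℂ),
      (∀ i j : Fin n, ¬ ((i : ℕ) < p ∧ p ≤ (j : ℕ)) → N i j = 0) ∧
      X = (g : Mat n) * N * (↑g⁻¹ : Mat n) := by
  have hle : LinearMap.range X.mulVecLin ≤ LinearMap.ker X.mulVecLin := by
    rintro _ ⟨v, rfl⟩
    simp [Matrix.mulVec_mulVec, hX]
  have hrk := LinearMap.finrank_range_add_finrank_ker X.mulVecLin
  have hr' : Module.finrank ℂ (LinearMap.range X.mulVecLin) = X.rank := rfl
  rw [hr'] at hrk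
  simp only [Module.finrank_fintype_fun_eq_card, Fintype.card_fin] at hrk
  have hr1 := le_min_iff.1 hr
  obtain ⟨W, h1, h2, h3⟩ := exists_between_submodule _ _ hle p (by omega) (by omega)
  obtain ⟨W', hc⟩ := Submodule.exists_isCompl W
  obtain ⟨g, hg⟩ := exists_adapted hpq W W' hc h3
  refine ⟨(↑g⁻¹ : Mat n) * (X * (g : Mat n)), g, ?_, ?_⟩
  · intro i j hij
    have e1 : ((↑g⁻¹ : Mat n) * (X * (g : Mat n))) i j
        = ((↑g⁻¹ : Mat n) *ᵥ (X *ᵥ (g : Mat n).col j)) i := rfl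
    rw [e1]
    by_cases hj : (j : ℕ) < p
    · have : X *ᵥ (g : Mat n).col j = 0 := h2 ((hg j).1.1 hj)
      rw [this]; simp
    · refine (hg i).2 _ (h1 ⟨_, rfl⟩) (by omega)
  · have : (g : Mat n) * (↑g⁻¹ : Mat n) = 1 := by simp
    rw [← mul_assoc, ← mul_assoc, this, one_mul, mul_assoc, this, mul_one]

/-- The diagonal element. -/
def lamM (n p q : ℕ) : Mat n :=
  Matrix.diagonal fun i : Fin n => if (i : ℕ) < p then (q : ℂ) else -(p : ℂ)

/-- Diagonalisation. -/
theorem semis_conj {n p q : ℕ} (hp : 1 ≤ p) (hpq : p + q = n) (X : Mat n) (t : ℂ)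
    (ht : t ≠ 0) (htr : X.trace = 0)
    (hX : X * X = (t * ((q : ℂ) - p)) • X + (t ^ 2 * p * q) • (1 : Mat n)) :
    ∃ g : Matrix.GeneralLinearGroup (Fin n) ℂ,
      X = t • ((g : Mat n) * lamM n p q * (↑g⁻¹ : Mat n)) := by
  have hn0 : (n : ℂ) ≠ 0 := by
    have : n ≠ 0 := by omega
    exact_mod_cast this
  have hnpq : (n : ℂ) = p + q := by rw [← hpq]; push_cast; rfl
  have hnpq0 : (p + q : ℂ) ≠ 0 := hnpq ▸ hn0
  let E : Mat n := (t * n)⁻¹ • (X + (t * p) • (1 : Mat n))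
  have hXE : X = (t * n) • E - (t * p) • (1 : Mat n) := by
    simp only [E, smul_smul]
    rw [mul_inv_cancel₀ (mul_ne_zero ht hn0), one_smul, add_sub_cancel_right]
  have hE : E * E = E := by
    have h1 : (X + (t * p) • (1 : Mat n)) * (X + (t * p) • (1 : Mat n))
        = (t * n) • (X + (t * p) • (1 : Mat n)) := by
      simp only [add_mul, mul_add, hX, smul_mul_assoc, mul_smul_comm, one_mul, mul_one, hnpq]
      module
    simp only [E, smul_mul_assoc, mul_smul_comm, h1, smul_smul]
    congr 1
    field_simp
  have htrE : E.trace = p := by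
    simp only [E, trace_smul, trace_add, htr, trace_one, smul_eq_mul, Fintype.card_fin]
    field_simp
    ring
  have hid : IsIdempotentElem (Matrix.toLin' E) := by
    have := congrArg Matrix.toLin' hE
    rw [Matrix.toLin'_mul] at this
    exact this
  have hfr : Module.finrank ℂ (LinearMap.range (Matrix.toLin' E)) = p := by
    have := (LinearMap.IsIdempotentElem.isProj_range _ hid).trace
    rw [Matrix.trace_toLin'_eq, htrE] at this
    exact_mod_cast this.symm
  obtain ⟨g, hg⟩ := exists_adapted hpq _ _ (LinearMap.IsIdempotentElem.isCompl hid) hfr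
  have hEg : E * (g : Mat n) = (g : Mat n) *
      Matrix.diagonal (fun i : Fin n => if (i : ℕ) < p then (1 : ℂ) else 0) := by
    ext i j
    have e1 : (E * (g : Mat n)) i j = (E *ᵥ (g : Mat n).col j) i := rfl
    rw [e1, Matrix.mul_diagonal]
    by_cases hj : (j : ℕ) < p
    · have := (LinearMap.IsIdempotentElem.mem_range_iff hid).1 ((hg j).1.1 hj)
      rw [Matrix.toLin'_apply] at this
      rw [this]; simp [hj]
    · have : E *ᵥ (g : Mat n).col j = 0 := (hg j).1.2 hj
      rw [this]; simp [hj]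
  have hlam : t • lamM n p q = (t * n) • Matrix.diagonal
      (fun i : Fin n => if (i : ℕ) < p then (1 : ℂ) else 0) - (t * p) • (1 : Mat n) := by
    ext i j
    simp only [lamM, Matrix.smul_apply, Matrix.sub_apply, Matrix.diagonal_apply, Matrix.one_apply,
      smul_eq_mul, hnpq]
    split_ifs <;> ring
  refine ⟨g, ?_⟩
  have hgg : (g : Mat n) * (↑g⁻¹ : Mat n) = 1 := by simp
  have hXg : X * (g : Mat n) = (g : Mat n) * (t • lamM n p q) := by
    rw [hlam, hXE, sub_mul, mul_sub, smul_mul_assoc, hEg]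
    simp
  calc X = X * ((g : Mat n) * (↑g⁻¹ : Mat n)) := by rw [hgg, mul_one]
    _ = _ := by rw [← mul_assoc, hXg]; simp

theorem det_block_zero {m : ℕ} (A D : Matrix (Fin m) (Fin m) ℂ) (τ : ℂ)
    (h : (A + τ • D).det = 0) :
    (Matrix.fromBlocks A (τ ^ 2 • D) D A).det = 0 := by
  obtain ⟨w, hw0, hw⟩ := Matrix.exists_mulVec_eq_zero_iff.2 h
  rw [Matrix.add_mulVec, Matrix.smul_mulVec] at hw
  refine Matrix.exists_mulVec_eq_zero_iff.1 ⟨Sum.elim (τ • w) w, ?_, ?_⟩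
  · intro h0
    apply hw0
    ext i
    exact congrFun h0 (Sum.inr i)
  · have e : A *ᵥ w = -(τ • D *ᵥ w) := eq_neg_of_add_eq_zero_left hw
    rw [Matrix.fromBlocks_mulVec]
    ext i
    rcases i with i | i
    · simp [Matrix.mulVec_smul, Matrix.smul_mulVec, e]; ring
    · simp [Matrix.mulVec_smul, e]

theorem exists_UV {n m : ℕ} (X : Mat n) (h : m ≤ X.rank) :
    ∃ (U : Matrix (Fin m) (Fin n) ℂ) (V : Matrix (Fin n) (Fin m) ℂ), U * X * V = 1 := by
  obtain ⟨f, hf⟩ := exists_linearIndependent_of_le_finrank (R := ℂ)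
    (M := LinearMap.range X.mulVecLin) h
  choose v hv using fun j => (f j).2
  have hf' : LinearIndependent ℂ (fun j => (f j : Fin n → ℂ)) :=
    hf.map' (Submodule.subtype _) (Submodule.ker_subtype _)
  let V : Matrix (Fin n) (Fin m) ℂ := Matrix.of fun i j => v j i
  have hcol : (X * V).col = fun j => (f j : Fin n → ℂ) := by
    ext j i
    rw [← hv j]
    rfl
  have hinj : Function.Injective (X * V).mulVec := by
    rw [Matrix.mulVec_injective_iff, hcol]
    exact hf'
  obtain ⟨φ, hφ⟩ := LinearMap.exists_leftInverse_of_injective (Matrix.toLin' (X * V))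
    (LinearMap.ker_eq_bot.2 hinj)
  refine ⟨LinearMap.toMatrix' φ, V, ?_⟩
  rw [Matrix.mul_assoc]
  have := congrArg LinearMap.toMatrix' hφ
  rw [LinearMap.toMatrix'_comp, LinearMap.toMatrix'_toLin', LinearMap.toMatrix'_id] at this
  exact this

theorem rank_limit {n : ℕ} (S : Set (Mat n)) (m : ℕ) (c : ℂ)
    (hS : ∀ Y ∈ S, ∃ τ : ℂ, τ ^ 2 = c * (Y * Y).trace ∧ (Y + τ • (1 : Mat n)).rank ≤ m)
    (X : Mat n) (hX : X ∈ zclosure S) (h0 : (X * X).trace = 0) : X.rank ≤ m := by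
  by_contra hcon
  obtain ⟨U, V, hUV⟩ := exists_UV (m := m + 1) X (by omega)
  let U' := U.map (MvPolynomial.C (σ := Fin n × Fin n))
  let V' := V.map (MvPolynomial.C (σ := Fin n × Fin n))
  let F : MvPolynomial (Fin n × Fin n) ℂ :=
    (Matrix.fromBlocks (U' * gX n * V') ((MvPolynomial.C c * (gX n * gX n).trace) • (U' * V'))
      (U' * V') (U' * gX n * V')).det
  have hU' : ∀ Y : Mat n, U'.map (evX Y) = U := by
    intro Y; ext i j; simp [U', evX]
  have hV' : ∀ Y : Mat n, V'.map (evX Y) = V := by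
    intro Y; ext i j; simp [V', evX]
  have hF : ∀ Y : Mat n, evX Y F = (Matrix.fromBlocks (U * Y * V)
      ((c * (Y * Y).trace) • (U * V)) (U * V) (U * Y * V)).det := by
    intro Y
    have hs : ((MvPolynomial.C c * (gX n * gX n).trace) • (U' * V')).map (evX Y)
        = (c * (Y * Y).trace) • (U * V) := by
      rw [Matrix.map_smul' (hf := map_mul _), Matrix.map_mul, hU', hV', map_mul, evX_C,
        AddMonoidHom.map_trace, Matrix.map_mul, gX_map]
    simp only [F, RingHom.map_det, RingHom.mapMatrix_apply, Matrix.fromBlocks_map, hs]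
    simp only [Matrix.map_mul, hU', hV', gX_map]
  have hz := (mem_zclosure S X).1 hX F (by
    intro Y hY
    obtain ⟨τ, hτ, hrk⟩ := hS Y hY
    rw [hF, ← hτ]
    apply det_block_zero
    by_contra hd
    have h1 := Matrix.rank_of_det_ne_zero hd
    have h2 : U * Y * V + τ • (U * V) = U * (Y + τ • (1 : Mat n)) * V := by
      simp [Matrix.mul_add, Matrix.add_mul]
    rw [h2] at h1
    have h3 := (Matrix.rank_mul_le_left (U * (Y + τ • (1 : Mat n))) V).trans
      (Matrix.rank_mul_le_right U _)
    simp at h1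
    omega)
  rw [hF, h0, mul_zero, zero_smul, Matrix.det_fromBlocks_zero₁₂, hUV] at hz
  simp at hz

theorem lamM_sq (n p q : ℕ) : lamM n p q * lamM n p q =
    ((q : ℂ) - p) • lamM n p q + ((p : ℂ) * q) • (1 : Mat n) := by
  ext i j
  simp only [lamM, Matrix.diagonal_mul_diagonal, Matrix.diagonal_apply, Matrix.add_apply,
    Matrix.smul_apply, Matrix.one_apply, smul_eq_mul]
  split_ifs <;> ring

theorem card_lt {n p q : ℕ} (hpq : p + q = n) :
    (Finset.univ.filter fun i : Fin n => (i : ℕ) < p).card = p := by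
  have := Fin.card_filter_val_lt (n := n) (m := p)
  simpa [hpq.symm] using this

theorem card_ge {n p q : ℕ} (hpq : p + q = n) :
    (Finset.univ.filter fun i : Fin n => ¬ (i : ℕ) < p).card = q := by
  have := Finset.card_filter_add_card_filter_not (s := (Finset.univ : Finset (Fin n)))
    (fun i : Fin n => (i : ℕ) < p)
  rw [card_lt hpq] at this
  simp only [Finset.card_univ, Fintype.card_fin] at this
  omega

theorem lamM_trace {n p q : ℕ} (hpq : p + q = n) : (lamM n p q).trace = 0 := by
  rw [lamM, Matrix.trace_diagonal, Finset.sum_ite, Finset.sum_const, Finset.sum_const,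
    card_lt hpq, card_ge hpq]
  simp; ring

theorem lamM_rank1 {n p q : ℕ} (hpq : p + q = n) :
    (lamM n p q + (p : ℂ) • (1 : Mat n)).rank ≤ p := by
  classical
  have : lamM n p q + (p : ℂ) • (1 : Mat n) = Matrix.diagonal
      fun i : Fin n => if (i : ℕ) < p then (q + p : ℂ) else 0 := by
    ext i j
    simp only [lamM, Matrix.diagonal_apply, Matrix.add_apply,
      Matrix.smul_apply, Matrix.one_apply, smul_eq_mul]
    split_ifs <;> ring
  rw [this, Matrix.rank_diagonal, Fintype.card_subtype]
  conv_rhs => rw [← card_lt hpq]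
  apply Finset.card_le_card
  intro i
  simp only [Finset.mem_filter, Finset.mem_univ, true_and]
  intro h
  by_contra h'
  simp [h'] at h

theorem lamM_rank2 {n p q : ℕ} (hpq : p + q = n) :
    (lamM n p q + (-q : ℂ) • (1 : Mat n)).rank ≤ q := by
  classical
  have : lamM n p q + (-q : ℂ) • (1 : Mat n) = Matrix.diagonal
      fun i : Fin n => if (i : ℕ) < p then 0 else (-p - q : ℂ) := by
    ext i j
    simp only [lamM, Matrix.diagonal_apply, Matrix.add_apply,
      Matrix.smul_apply, Matrix.one_apply, smul_eq_mul]
    split_ifs <;> ring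
  rw [this, Matrix.rank_diagonal, Fintype.card_subtype]
  conv_rhs => rw [← card_ge hpq]
  apply Finset.card_le_card
  intro i
  simp only [Finset.mem_filter, Finset.mem_univ, true_and]
  intro h h'
  simp [h'] at h

/-- The cone over the semisimple orbit. -/
def coneC (n p q : ℕ) : Set (Mat n) :=
  {X | ∃ t : ℂ, t ≠ 0 ∧ ∃ g : Matrix.GeneralLinearGroup (Fin n) ℂ,
      X = t • ((g : Mat n) * lamM n p q * ((↑g⁻¹ : Mat n)))}

theorem cone_props {n p q : ℕ} (hpq : p + q = n) (t : ℂ)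
    (g : Matrix.GeneralLinearGroup (Fin n) ℂ) (X : Mat n)
    (hX : X = t • ((g : Mat n) * lamM n p q * ((↑g⁻¹ : Mat n)))) :
    X.trace = 0 ∧
    X * X = (t * ((q : ℂ) - p)) • X + (t ^ 2 * p * q) • (1 : Mat n) ∧
    (X * X).trace = t ^ 2 * p * q * n ∧
    (X + (t * p) • (1 : Mat n)).rank ≤ p ∧ (X + (t * -q) • (1 : Mat n)).rank ≤ q := by
  have hgg : (g : Mat n) * (↑g⁻¹ : Mat n) = 1 := by simp
  have hgg' : (↑g⁻¹ : Mat n) * (g : Mat n) = 1 := by simp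
  have htr : X.trace = 0 := by
    rw [hX, Matrix.trace_smul, Matrix.trace_mul_comm, ← mul_assoc, hgg', one_mul, lamM_trace hpq,
      smul_zero]
  have hsq : X * X = (t * ((q : ℂ) - p)) • X + (t ^ 2 * p * q) • (1 : Mat n) := by
    have e : X * X = t ^ 2 • ((g : Mat n) * (lamM n p q * lamM n p q) * (↑g⁻¹ : Mat n)) := by
      rw [hX, smul_mul_smul_comm, ← sq]
      congr 1
      calc _ = (g : Mat n) * lamM n p q * ((↑g⁻¹ : Mat n) * (g : Mat n)) * lamM n p q
            * (↑g⁻¹ : Mat n) := by simp only [mul_assoc]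
        _ = _ := by rw [hgg']; simp only [mul_assoc, one_mul]
    rw [e, lamM_sq, hX]
    simp only [mul_add, add_mul, mul_smul_comm, smul_mul_assoc, mul_one, hgg]
    module
  have key : ∀ (c : ℂ), X + (t * c) • (1 : Mat n)
      = (t • (g : Mat n)) * (lamM n p q + c • (1 : Mat n)) * (↑g⁻¹ : Mat n) := by
    intro c
    rw [hX]
    simp only [mul_add, add_mul, mul_smul_comm, smul_mul_assoc, mul_one, hgg]
    module
  refine ⟨htr, hsq, ?_, ?_, ?_⟩
  · rw [hsq, Matrix.trace_add, Matrix.trace_smul, Matrix.trace_smul, htr]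
    simp
  · rw [key]
    exact ((Matrix.rank_mul_le_left _ _).trans (Matrix.rank_mul_le_right _ _)).trans
      (lamM_rank1 hpq)
  · rw [key]
    exact ((Matrix.rank_mul_le_left _ _).trans (Matrix.rank_mul_le_right _ _)).trans
      (lamM_rank2 hpq)

theorem zclosure_sub {n p q : ℕ} (hp : 1 ≤ p) (hq : 1 ≤ q) (hpq : p + q = n) (X : Mat n)
    (hX : X ∈ zclosure (coneC n p q)) :
    X ∈ coneC n p q ∪ {X | X.trace = 0 ∧ X * X = 0 ∧ X.rank ≤ min p q} := by
  have hn0 : (n : ℂ) ≠ 0 := by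
    have : n ≠ 0 := by omega
    exact_mod_cast this
  have hp0 : (p : ℂ) ≠ 0 := by
    have : p ≠ 0 := by omega
    exact_mod_cast this
  have hq0 : (q : ℂ) ≠ 0 := by
    have : q ≠ 0 := by omega
    exact_mod_cast this
  have htr : X.trace = 0 := by
    have := (mem_zclosure _ X).1 hX (gX n).trace (by
      rintro Y ⟨t, _, g, hY⟩
      rw [AddMonoidHom.map_trace, gX_map]
      exact (cone_props hpq t g Y hY).1)
    rwa [AddMonoidHom.map_trace, gX_map] at this
  -- the quadratic relation
  have hquad : ∀ i j k l : Fin n,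
      ((X * X) i j - (X * X).trace * (n : ℂ)⁻¹ * (1 : Mat n) i j) *
      ((X * X) k l - (X * X).trace * (n : ℂ)⁻¹ * (1 : Mat n) k l) =
      ((q : ℂ) - p) ^ 2 * ((p : ℂ) * q * n)⁻¹ * (X * X).trace * (X i j * X k l) := by
    intro i j k l
    let Z : Fin n → Fin n → MvPolynomial (Fin n × Fin n) ℂ := fun i j =>
      (gX n * gX n) i j - (gX n * gX n).trace * MvPolynomial.C ((n : ℂ)⁻¹ * (1 : Mat n) i j)
    have hsq : ∀ (Y : Mat n) (i j : Fin n), evX Y ((gX n * gX n) i j) = (Y * Y) i j := by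
      intro Y i j
      have : evX Y ((gX n * gX n) i j) = ((gX n * gX n).map (evX Y)) i j := rfl
      rw [this, Matrix.map_mul, gX_map]
    have hst : ∀ (Y : Mat n), evX Y ((gX n * gX n).trace) = (Y * Y).trace := by
      intro Y
      rw [AddMonoidHom.map_trace, Matrix.map_mul, gX_map]
    have hZ : ∀ (Y : Mat n) (i j : Fin n), evX Y (Z i j) =
        (Y * Y) i j - (Y * Y).trace * (n : ℂ)⁻¹ * (1 : Mat n) i j := by
      intro Y i j
      simp only [Z, map_sub, map_mul, evX_C, hsq, hst, mul_assoc]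
    obtain ⟨κ, hκ⟩ : ∃ κ : ℂ, κ = ((q : ℂ) - p) ^ 2 * ((p : ℂ) * q * n)⁻¹ := ⟨_, rfl⟩
    rw [← hκ]
    have := (mem_zclosure _ X).1 hX (Z i j * Z k l -
        MvPolynomial.C κ * (gX n * gX n).trace *
          (gX n i j * gX n k l)) (by
      rintro Y ⟨t, _, g, hY⟩
      obtain ⟨h1, h2, h3, -⟩ := cone_props hpq t g Y hY
      have hz : ∀ i j, evX Y (Z i j) = t * ((q : ℂ) - p) * Y i j := by
        intro i j
        rw [hZ, h3, h2]
        simp only [Matrix.add_apply, Matrix.smul_apply, smul_eq_mul]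
        field_simp
        ring
      simp only [map_sub, map_mul, hz, evX_C, hst, h3, evX_gX]
      rw [hκ]
      field_simp
      ring)
    simp only [map_sub, map_mul, hZ, evX_C, hst, evX_gX] at this
    exact sub_eq_zero.1 this
  by_cases h0 : (X * X).trace = 0
  · right
    refine ⟨htr, ?_, le_min ?_ ?_⟩
    · ext i j
      have := hquad i j i j
      rw [h0] at this
      simpa using this
    · refine rank_limit (coneC n p q) p (p * ((q : ℂ) * n)⁻¹) ?_ X hX h0
      rintro Y ⟨t, _, g, hY⟩
      obtain ⟨-, -, h3, h4, h5⟩ := cone_props hpq t g Y hY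
      refine ⟨t * p, ?_, h4⟩
      rw [h3]; field_simp
    · refine rank_limit (coneC n p q) q (q * ((p : ℂ) * n)⁻¹) ?_ X hX h0
      rintro Y ⟨t, _, g, hY⟩
      obtain ⟨-, -, h3, h4, h5⟩ := cone_props hpq t g Y hY
      refine ⟨t * -q, ?_, h5⟩
      rw [h3]; field_simp
  · left
    obtain ⟨r, hr⟩ := IsAlgClosed.exists_pow_nat_eq ((X * X).trace * ((p : ℂ) * q * n)⁻¹)
      (n := 2) (by norm_num)
    have hs : (X * X).trace = r ^ 2 * p * q * n := by
      rw [hr]; field_simp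
    have hr0 : r ≠ 0 := by
      rintro rfl
      apply h0; rw [hs]; ring
    -- find the sign
    have hsign : ∃ t : ℂ, t ^ 2 = r ^ 2 ∧ ∀ i j,
        (X * X) i j - r ^ 2 * p * q * (1 : Mat n) i j = t * ((q : ℂ) - p) * X i j := by
      have hq2 : ∀ i j k l : Fin n,
          ((X * X) i j - r ^ 2 * p * q * (1 : Mat n) i j) *
          ((X * X) k l - r ^ 2 * p * q * (1 : Mat n) k l) =
          (r * ((q : ℂ) - p)) ^ 2 * (X i j * X k l) := by
        intro i j k l
        have := hquad i j k l
        rw [hs] at this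
        have e : r ^ 2 * p * q * n * (n : ℂ)⁻¹ = r ^ 2 * p * q := by field_simp
        have e' : ((q : ℂ) - p) ^ 2 * ((p : ℂ) * q * n)⁻¹ * (r ^ 2 * p * q * n)
            = (r * ((q : ℂ) - p)) ^ 2 := by field_simp
        rwa [e, e'] at this
      have hXne : ∃ k l, X k l ≠ 0 := by
        by_contra hcon
        push Not at hcon
        apply h0
        have : X = 0 := by ext i j; exact hcon i j
        rw [this]; simp
      obtain ⟨k, l, hkl⟩ := hXne
      have hkk := hq2 k l k l
      have : ∃ t : ℂ, t ^ 2 = r ^ 2 ∧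
          (X * X) k l - r ^ 2 * p * q * (1 : Mat n) k l = t * ((q : ℂ) - p) * X k l := by
        have h2 : ((X * X) k l - r ^ 2 * p * q * (1 : Mat n) k l) ^ 2
            = (r * ((q : ℂ) - p) * X k l) ^ 2 := by
          linear_combination hkk
        rcases sq_eq_sq_iff_eq_or_eq_neg.1 h2 with h | h
        · exact ⟨r, rfl, h⟩
        · exact ⟨-r, by ring, by rw [h]; ring⟩
      obtain ⟨t, ht, hkl2⟩ := this
      refine ⟨t, ht, fun i j => ?_⟩
      by_cases hb : (q : ℂ) - p = 0
      · have := hq2 i j i j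
        rw [hb] at this ⊢
        simp only [mul_zero, zero_mul, ne_eq, OfNat.ofNat_ne_zero, not_false_eq_true, zero_pow,
          mul_self_eq_zero] at this ⊢
        exact this
      · have h1 := hq2 i j k l
        rw [hkl2] at h1
        have ht0 : t ≠ 0 := by
          rintro rfl
          apply hr0
          have : r ^ 2 = 0 := by rw [← ht]; ring
          exact pow_eq_zero_iff (two_ne_zero) |>.1 this
        have hne : t * ((q : ℂ) - p) * X k l ≠ 0 := mul_ne_zero (mul_ne_zero ht0 hb) hkl
        apply mul_right_cancel₀ hne
        rw [h1, mul_pow, ← ht]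
        ring
    obtain ⟨t, ht, hZ⟩ := hsign
    have ht0 : t ≠ 0 := by
      rintro rfl
      apply hr0
      have : r ^ 2 = 0 := by rw [← ht]; ring
      exact pow_eq_zero_iff (two_ne_zero) |>.1 this
    obtain ⟨g, hg⟩ := semis_conj hp hpq X t ht0 htr (by
      ext i j
      simp only [Matrix.add_apply, Matrix.smul_apply, smul_eq_mul]
      rw [ht]
      linear_combination hZ i j)
    exact ⟨t, ht0, g, hg⟩

theorem lamM_mul {n p q : ℕ} (N : Mat n)
    (hN : ∀ i j : Fin n, ¬ ((i : ℕ) < p ∧ p ≤ (j : ℕ)) → N i j = 0) :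
    lamM n p q * N = (q : ℂ) • N ∧ N * lamM n p q = (-p : ℂ) • N ∧ N * N = 0 := by
  refine ⟨?_, ?_, ?_⟩
  · ext i j
    rw [lamM, Matrix.diagonal_mul]
    by_cases h : (i : ℕ) < p
    · simp [h]
    · simp [hN i j (by omega)]
  · ext i j
    rw [lamM, Matrix.mul_diagonal]
    by_cases h : (j : ℕ) < p
    · simp [hN i j (by omega)]
    · simp [h, mul_comm]
  · ext i j
    rw [Matrix.mul_apply]
    apply Finset.sum_eq_zero
    intro k _
    by_cases h : (k : ℕ) < p
    · rw [hN i k (by omega), zero_mul]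
    · rw [hN k j (by omega), mul_zero]

theorem conj_mem_cone {n p q : ℕ} (hp : 1 ≤ p) (hpq : p + q = n) (N : Mat n)
    (hN : ∀ i j : Fin n, ¬ ((i : ℕ) < p ∧ p ≤ (j : ℕ)) → N i j = 0)
    (g : Matrix.GeneralLinearGroup (Fin n) ℂ) (t : ℂ) (ht : t ≠ 0) :
    (g : Mat n) * (t • lamM n p q + N) * (↑g⁻¹ : Mat n) ∈ coneC n p q := by
  have hn0 : (n : ℂ) ≠ 0 := by
    have : n ≠ 0 := by omega
    exact_mod_cast this
  have hnpq : (n : ℂ) = p + q := by rw [← hpq]; push_cast; rfl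
  obtain ⟨h1, h2, h3⟩ := lamM_mul (q := q) N hN
  let c : ℂ := -(t * n)⁻¹
  have hc : c * t * (p + q) = -1 := by
    rw [← hnpq]; simp only [c]; field_simp
  let u : Matrix.GeneralLinearGroup (Fin n) ℂ := ⟨1 + c • N, 1 - c • N, by
    simp [mul_sub, add_mul, h3], by simp [sub_mul, mul_add, h3]⟩
  have hu : (u : Mat n) = 1 + c • N := rfl
  have hu' : (↑u⁻¹ : Mat n) = 1 - c • N := rfl
  have key : t • lamM n p q + N = t • ((u : Mat n) * lamM n p q * (↑u⁻¹ : Mat n)) := by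
    rw [hu, hu']
    simp only [mul_sub, add_mul, mul_one, one_mul, mul_smul_comm, smul_mul_assoc, h1, h2, h3,
      smul_zero]
    have : N = (-(c * t * (p + q))) • N := by rw [hc]; simp
    conv_lhs => rw [this]
    module
  refine ⟨t, ht, g * u, ?_⟩
  rw [key, _root_.mul_inv_rev, Units.val_mul, Units.val_mul]
  simp only [mul_smul_comm, smul_mul_assoc, mul_assoc]

theorem conj_mem_zclosure {n p q : ℕ} (hp : 1 ≤ p) (hpq : p + q = n) (N : Mat n)
    (hN : ∀ i j : Fin n, ¬ ((i : ℕ) < p ∧ p ≤ (j : ℕ)) → N i j = 0)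
    (g : Matrix.GeneralLinearGroup (Fin n) ℂ) (t : ℂ) :
    (g : Mat n) * (t • lamM n p q + N) * (↑g⁻¹ : Mat n) ∈ zclosure (coneC n p q) := by
  rw [mem_zclosure]
  intro f hf
  let φ : ℂ → ℂ := fun s => evX ((g : Mat n) * (s • lamM n p q + N) * (↑g⁻¹ : Mat n)) f
  have hcont : Continuous φ := by
    have h1 : Continuous fun s : ℂ => (g : Mat n) * (s • lamM n p q + N) * (↑g⁻¹ : Mat n) := by
      fun_prop
    refine (MvPolynomial.continuous_eval f).comp ?_
    refine continuous_pi fun ij => ?_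
    exact h1.matrix_elem ij.1 ij.2
  have hd : Dense ({0}ᶜ : Set ℂ) := dense_compl_singleton 0
  have : φ = fun _ => 0 := by
    refine Continuous.ext_on hd hcont continuous_const ?_
    intro s hs
    exact hf _ (conj_mem_cone hp hpq N hN g s hs)
  exact congrFun this t

theorem stmt_0 (n p q : ℕ) (hn : 2 ≤ n) (hp : 1 ≤ p) (hq : 1 ≤ q) (hpq : p + q = n)
    (lam : Mat n)
    (hlam : lam = Matrix.diagonal fun i : Fin n => if (i : ℕ) < p then (q : ℂ) else -(p : ℂ))
    (C : Set (Mat n))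
    (hC : C = {X | ∃ t : ℂ, t ≠ 0 ∧ ∃ g : Matrix.GeneralLinearGroup (Fin n) ℂ,
      X = t • ((g : Mat n) * lam * ((↑g⁻¹ : Mat n)))})
    (pu : Set (Mat n))
    (hpu : pu = {N : Mat n | ∀ i j : Fin n, ¬ ((i : ℕ) < p ∧ p ≤ (j : ℕ)) → N i j = 0}) :
    zclosure C =
      {X | ∃ (t : ℂ) (N : Mat n) (g : Matrix.GeneralLinearGroup (Fin n) ℂ), N ∈ pu ∧
        X = (g : Mat n) * (t • lam + N) * (↑g⁻¹ : Mat n)} ∧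
    zclosure C = C ∪ {X | X.trace = 0 ∧ X * X = 0 ∧ X.rank ≤ min p q} := by
  have hl : lam = lamM n p q := hlam
  subst hl
  have hC' : C = coneC n p q := hC
  subst hC'
  subst hpu
  have hBA : coneC n p q ∪ {X | X.trace = 0 ∧ X * X = 0 ∧ X.rank ≤ min p q} ⊆
      {X | ∃ (t : ℂ) (N : Mat n) (g : Matrix.GeneralLinearGroup (Fin n) ℂ),
        N ∈ {N : Mat n | ∀ i j : Fin n, ¬ ((i : ℕ) < p ∧ p ≤ (j : ℕ)) → N i j = 0} ∧
        X = (g : Mat n) * (t • lamM n p q + N) * (↑g⁻¹ : Mat n)} := by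
    rintro X (⟨t, _, g, hX⟩ | ⟨_, h2, h3⟩)
    · exact ⟨t, 0, g, fun _ _ _ => rfl, by rw [hX]; simp⟩
    · obtain ⟨N, g, hN, hX⟩ := nilp_conj hpq X h2 h3
      exact ⟨0, N, g, hN, by rw [zero_smul, zero_add]; exact hX⟩
  have hA : {X | ∃ (t : ℂ) (N : Mat n) (g : Matrix.GeneralLinearGroup (Fin n) ℂ),
        N ∈ {N : Mat n | ∀ i j : Fin n, ¬ ((i : ℕ) < p ∧ p ≤ (j : ℕ)) → N i j = 0} ∧
        X = (g : Mat n) * (t • lamM n p q + N) * (↑g⁻¹ : Mat n)} ⊆ zclosure (coneC n p q) := by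
    rintro X ⟨t, N, g, hN, rfl⟩
    exact conj_mem_zclosure hp hpq N hN g t
  have hB : zclosure (coneC n p q) ⊆
      coneC n p q ∪ {X | X.trace = 0 ∧ X * X = 0 ∧ X.rank ≤ min p q} :=
    fun X hX => zclosure_sub hp hq hpq X hX
  exact ⟨(hB.trans hBA).antisymm hA, hB.antisymm (hBA.trans hA)⟩
end
end

section
/- Let n ≥ 4 and for X ∈ sl_n(ℂ) put μ(X) = X_{n,1}·X_{n−1,2} − X_{n−1,1}·X_{n,2}, where X_{i,j} denotes the (i,j) entry. Then the set V = {X ∈ sl_n(ℂ) : μ(g·X·g⁻¹) = 0 for all g ∈ GL_n(ℂ)} equals the Zariski closure of the cone {t·g·D·g⁻¹ : t ∈ ℂ∖{0}, g ∈ GL_n(ℂ)}, where D = diag(n−1, −1, −1, …, −1); equivalently, V = {t·g·D·g⁻¹ : t ∈ ℂ∖{0}, g ∈ GL_n(ℂ)} ∪ {X ∈ sl_n(ℂ) : rank X ≤ 1}. -/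
open Matrix

noncomputable section

abbrev GLn (n : ℕ) := Matrix.GeneralLinearGroup (Fin n) ℂ

/-- Two vectors satisfy a nontrivial linear relation. -/
def Dep2 {V : Type*} [AddCommGroup V] [Module ℂ V] (a b : V) : Prop :=
  ∃ p q : ℂ, (p ≠ 0 ∨ q ≠ 0) ∧ p • a + q • b = 0

section abstractPart
set_option linter.unusedSectionVars false
variable {V : Type*} [AddCommGroup V] [Module ℂ V] [FiniteDimensional ℂ V]

/-- The pairs condition: `v, w, f v, f w` are always dependent. -/
def D4 (f : V →ₗ[ℂ] V) : Prop :=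
  ∀ v w, ∃ α β γ δ : ℂ, (α ≠ 0 ∨ β ≠ 0 ∨ γ ≠ 0 ∨ δ ≠ 0) ∧
    α • v + β • w + γ • f v + δ • f w = 0

theorem D4.sub {f : V →ₗ[ℂ] V} (h : D4 f) (l : ℂ) : D4 (f - l • LinearMap.id) := by
  intro v w
  obtain ⟨α, β, γ, δ, h0, h1⟩ := h v w
  refine ⟨α + l * γ, β + l * δ, γ, δ, ?_, ?_⟩
  · by_contra! hc
    obtain ⟨h2, h3, rfl, rfl⟩ := hc
    simp at h2 h3
    simp [h2, h3] at h0
  · rw [← h1]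
    simp only [LinearMap.sub_apply, LinearMap.smul_apply, LinearMap.id_apply]
    module

theorem D4.cyclic {f : V →ₗ[ℂ] V} (h : D4 f) (hd : 4 ≤ Module.finrank ℂ V) (v : V) :
    ∃ a b c : ℂ, (a ≠ 0 ∨ b ≠ 0 ∨ c ≠ 0) ∧ a • v + b • f v + c • f (f v) = 0 := by
  by_contra! hc
  have hli : LinearIndependent ℂ ![v, f v, f (f v)] := by
    rw [Fintype.linearIndependent_iff]
    intro g hg
    simp [Fin.sum_univ_succ] at hg
    by_contra! hne
    apply hc (g 0) (g 1) (g 2) _ (by rw [← hg]; module)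
    obtain ⟨i, hi⟩ := hne
    fin_cases i <;> simp_all
  have hx : ∃ x, x ∉ Submodule.span ℂ (Set.range ![v, f v, f (f v)]) := by
    by_contra! hall
    have := finrank_span_eq_card hli
    rw [(Submodule.eq_top_iff').2 hall, finrank_top] at this
    simp at this
    omega
  obtain ⟨x, hx⟩ := hx
  have hli4 := linearIndependent_finCons.2 ⟨hli, hx⟩
  have H : ∀ a b c d : ℂ, a • v + b • f v + c • f (f v) + d • x = 0 →
      a = 0 ∧ b = 0 ∧ c = 0 ∧ d = 0 := by
    intro a b c d he
    rw [Fintype.linearIndependent_iff] at hli4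
    have := hli4 ![d, a, b, c] (by
      rw [← he]; simp [Fin.sum_univ_succ]; module)
    exact ⟨this 1, this 2, this 3, this 0⟩
  obtain ⟨α, β, γ, δ, h0, h1⟩ := h v (f v + x)
  obtain ⟨α', β', γ', δ', h0', h1'⟩ := h v (f v - x)
  rw [map_add] at h1
  rw [map_sub] at h1'
  have hδ : δ ≠ 0 := by
    rintro rfl
    obtain ⟨e1, e2, -, e4⟩ := H α (β + γ) 0 β (by rw [← h1]; module)
    subst e1 e4
    simp at e2
    simp [e2] at h0
  have hδ' : δ' ≠ 0 := by
    rintro rfl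
    obtain ⟨e1, e2, -, e4⟩ := H α' (β' + γ') 0 (-β') (by rw [← h1']; module)
    simp at e4
    subst e1 e4
    simp at e2
    simp [e2] at h0'
  obtain ⟨-, -, e, -⟩ := H (δ' * α + δ * α') (δ' * (β + γ) + δ * (β' + γ')) (2 * δ * δ')
    (δ' * β - δ * β') (by
      have : δ' • (α • v + β • (f v + x) + γ • f v + δ • (f (f v) + f x)) +
        δ • (α' • v + β' • (f v - x) + γ' • f v + δ' • (f (f v) - f x)) = 0 := by
        rw [h1, h1']; simp
      rw [← this]; module)
  simp [hδ, hδ'] at e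

theorem D4.sing {f : V →ₗ[ℂ] V} (h : D4 f) (hd : 4 ≤ Module.finrank ℂ V) {x : V} (hx0 : x ≠ 0)
    (hx : f x = 0) (v : V) : Dep2 (f v) (f (f v)) := by
  obtain ⟨a, b, c, h0, h1⟩ := h.cyclic hd v
  obtain ⟨a', b', c', h0', h1'⟩ := h.cyclic hd (v + x)
  simp only [map_add, hx, add_zero] at h1'
  have h2 := congrArg f h1
  simp only [map_add, map_smul, map_zero] at h2
  by_cases ha : a = 0
  · subst ha
    exact ⟨b, c, by simpa using h0, by simpa using h1⟩
  by_cases ha' : a' = 0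
  · subst ha'
    exact ⟨b', c', by simpa using h0', by simpa using h1'⟩
  by_cases hc : c = 0
  · subst hc
    exact ⟨a, b, Or.inl ha, by simpa using h2⟩
  have h3 : (a' * b - a * b') • f v + (a' * c - a * c') • f (f v) = (a * a') • x := by
    have : a' • (a • v + b • f v + c • f (f v)) - a • (a' • (v + x) + b' • f v + c' • f (f v)) = 0 := by
      rw [h1, h1']; simp
    rw [← sub_eq_zero, ← this]; module
  have h4 := congrArg f h3
  simp only [map_add, map_smul, hx, smul_zero] at h4
  generalize a' * b - a * b' = p at *
  generalize a' * c - a * c' = q at *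
  refine ⟨-(q * a), c * p - q * b, ?_, ?_⟩
  · by_cases hq : q = 0
    · subst hq
      right
      have : p ≠ 0 := by
        rintro rfl
        have h5 := h3.symm
        simp [ha, ha', hx0] at h5
      simp [hc, this]
    · left; simp [hq, ha]
  · have : c • (p • f (f v) + q • f (f (f v))) - q • (a • f v + b • f (f v) + c • f (f (f v))) = 0 := by
      rw [h4, h2]; simp
    rw [← this]; module

theorem not_dep2 {a b : V} (h : ¬ Dep2 a b) (p q : ℂ) (he : p • a + q • b = 0) : p = 0 ∧ q = 0 := by
  by_contra hc
  exact h ⟨p, q, by tauto, he⟩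

theorem D4.main {f : V →ₗ[ℂ] V} (h : D4 f) (hd : 4 ≤ Module.finrank ℂ V) :
    ∃ l : ℂ, ∀ a b, Dep2 (f a - l • a) (f b - l • b) := by
  have : Nontrivial V := Module.nontrivial_of_finrank_pos (R := ℂ) (by omega)
  obtain ⟨l, hl⟩ := Module.End.exists_eigenvalue f
  obtain ⟨x, hx⟩ := hl.exists_hasEigenvector
  have hNdef : ∃ N : V →ₗ[ℂ] V, N = f - l • LinearMap.id := ⟨_, rfl⟩
  obtain ⟨N, hN⟩ := hNdef
  have hNv : ∀ v, N v = f v - l • v := by intro v; rw [hN]; simp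
  have hD : D4 N := hN ▸ h.sub l
  have hs := hD.sing hd hx.2 (by rw [hNv, hx.apply_eq_smul, sub_self])
  have hc : ∃ c : ℂ, ∀ v, N (N v) = c • N v := by
    have hr : ∀ y ∈ LinearMap.range N, N y ∈ LinearMap.range N := fun y _ => ⟨y, rfl⟩
    obtain ⟨c, hc⟩ := LinearMap.exists_eq_smul_id_of_forall_notLinearIndependent
      (f := N.restrict hr) (by
        rintro ⟨y, v, rfl⟩ hli
        obtain ⟨p, q, h0, h1⟩ := hs v
        rw [LinearIndependent.pair_iff] at hli
        have := hli p q (by ext; simpa using h1)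
        tauto)
    refine ⟨c, fun v => ?_⟩
    have := congrArg (fun F => ((F ⟨N v, v, rfl⟩ : LinearMap.range N) : V)) hc
    simpa using this
  obtain ⟨c, hc⟩ := hc
  by_contra! hcon
  obtain ⟨a, b, hab⟩ := hcon l
  rw [← hNv, ← hNv] at hab
  have hab' := not_dep2 hab
  by_cases hc0 : c = 0
  · subst hc0
    simp only [zero_smul] at hc
    obtain ⟨α, β, γ, δ, h0, h1⟩ := hD a b
    have h2 := congrArg N h1
    simp only [map_add, map_smul, hc, smul_zero, add_zero, map_zero] at h2
    obtain ⟨rfl, rfl⟩ := hab' _ _ h2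
    obtain ⟨rfl, rfl⟩ := hab' γ δ (by simpa using h1)
    simp at h0
  · obtain ⟨a', b', hb⟩ := hcon (l + c)
    have e : ∀ v, f v - (l + c) • v = N v - c • v := by intro v; rw [hNv]; module
    rw [e, e] at hb
    have hb' := not_dep2 hb
    obtain ⟨α, β, γ, δ, h0, h1⟩ := hD (N a + (N a' - c • a')) (N b + (N b' - c • b'))
    simp only [map_add, map_sub, map_smul, hc, sub_self, add_zero] at h1
    have h2 := congrArg N h1
    simp only [map_add, map_sub, map_smul, hc, sub_self, add_zero, map_zero] at h2
    obtain ⟨e1, e2⟩ := hab' (c * (α + c * γ)) (c * (β + c * δ)) (by rw [← h2]; module)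
    simp [hc0] at e1 e2
    have e3 : α = -(c * γ) := by linear_combination e1
    have e4 : β = -(c * δ) := by linear_combination e2
    subst e3 e4
    obtain ⟨e5, e6⟩ := hb' (-(c * γ)) (-(c * δ)) (by rw [← h1]; module)
    simp [hc0] at e5 e6
    simp [e5, e6] at h0

theorem rank_one_of_dep {N : V →ₗ[ℂ] V} (h : ∀ a b, Dep2 (N a) (N b)) :
    ∃ u, ∀ b, ∃ k : ℂ, N b = k • u := by
  by_cases h0 : ∀ a, N a = 0
  · exact ⟨0, fun b => ⟨0, by simp [h0]⟩⟩
  push Not at h0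
  obtain ⟨a, ha⟩ := h0
  refine ⟨N a, fun b => ?_⟩
  obtain ⟨p, q, h1, h2⟩ := h a b
  have hq : q ≠ 0 := by
    rintro rfl
    simp [ha] at h2
    simp [h2] at h1
  refine ⟨-(p / q), ?_⟩
  have : N b = q⁻¹ • ((p • N a + q • N b) - p • N a) := by
    rw [add_sub_cancel_left, smul_smul, inv_mul_cancel₀ hq, one_smul]
  rw [this, h2]
  module

theorem exists_equiv {ι : Type*} [Fintype ι] {v w : ι → V} (hv : LinearIndependent ℂ v)
    (hw : LinearIndependent ℂ w) : ∃ φ : V ≃ₗ[ℂ] V, ∀ i, φ (v i) = w i := by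
  classical
  let bv := Module.Basis.sumExtend hv
  let bw := Module.Basis.sumExtend hw
  have : Finite (ι ⊕ Module.Basis.sumExtendIndex hv) := Module.Finite.finite_basis bv
  have : Finite (ι ⊕ Module.Basis.sumExtendIndex hw) := Module.Finite.finite_basis bw
  have : Finite (Module.Basis.sumExtendIndex hv) := Finite.sum_right ι
  have : Finite (Module.Basis.sumExtendIndex hw) := Finite.sum_right ι
  have hcard := Nat.card_congr (bv.indexEquiv bw)
  rw [Nat.card_sum, Nat.card_sum] at hcard
  have e : Module.Basis.sumExtendIndex hv ≃ Module.Basis.sumExtendIndex hw :=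
    ((Finite.card_eq).1 (by omega)).some
  refine ⟨bv.equiv bw (Equiv.sumCongr (Equiv.refl ι) e), fun i => ?_⟩
  have h1 : bv (Sum.inl i) = v i := by simp [bv, Module.Basis.sumExtend]; rfl
  have h2 : bw (Sum.inl i) = w i := by simp [bw, Module.Basis.sumExtend]; rfl
  rw [← h1, Module.Basis.equiv_apply, ← h2]
  rfl

end abstractPart

section matrixPart

theorem exists_GL {n : ℕ} {ι : Type*} [Fintype ι] {j : ι → Fin n} (hj : Function.Injective j)
    {v : ι → Fin n → ℂ} (hv : LinearIndependent ℂ v) :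
    ∃ P : GLn n, ∀ i, (P : Mat n) *ᵥ Pi.single (j i) 1 = v i := by
  have h1 : LinearIndependent ℂ (fun i => (Pi.single (j i) 1 : Fin n → ℂ)) := by
    have := (Pi.basisFun ℂ (Fin n)).linearIndependent.comp j hj
    convert this using 2
    simp
  obtain ⟨φ, hφ⟩ := exists_equiv h1 hv
  refine ⟨⟨LinearMap.toMatrix' φ.toLinearMap, LinearMap.toMatrix' φ.symm.toLinearMap, ?_, ?_⟩, ?_⟩
  · rw [← LinearMap.toMatrix'_comp]; simp
  · rw [← LinearMap.toMatrix'_comp]; simp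
  · intro i
    rw [← hφ i]
    exact LinearMap.toMatrix'_mulVec _ _

theorem conj_form {n : ℕ} (g : GLn n) (l : ℂ) (u w : Fin n → ℂ) :
    (g : Mat n) * (l • 1 + vecMulVec u w) * (↑g⁻¹ : Mat n) =
      l • 1 + vecMulVec ((g : Mat n) *ᵥ u) (w ᵥ* (↑g⁻¹ : Mat n)) := by
  rw [mul_add, add_mul, mul_vecMulVec, vecMulVec_mul]
  simp only [mul_smul_comm, smul_mul_assoc, mul_one]
  rw [Units.mul_inv]

theorem form_of_dep {n : ℕ} {X : Mat n} (hn : 4 ≤ n) (h : D4 X.mulVecLin) :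
    ∃ (l : ℂ) (u w : Fin n → ℂ), X = l • 1 + vecMulVec u w := by
  obtain ⟨l, hl⟩ := h.main (by simpa using hn)
  obtain ⟨u, hu⟩ := rank_one_of_dep (N := X.mulVecLin - l • LinearMap.id) (by
    intro a b; simpa using hl a b)
  choose k hk using hu
  refine ⟨l, u, fun j => k (Pi.single j 1), ?_⟩
  ext i j
  have := congrFun (hk (Pi.single j 1)) i
  simp [Matrix.col_apply] at this
  simp only [Matrix.add_apply, Matrix.smul_apply, vecMulVec_apply, Matrix.one_apply, smul_eq_mul]
  rw [Pi.single_apply] at this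
  linear_combination this

theorem dep_of_mu {n : ℕ} {X : Mat n} {i j k l : Fin n} (hinj : Function.Injective ![i, j, k, l])
    (h : ∀ g : GLn n, ((g : Mat n) * X * (↑g⁻¹ : Mat n)) l i * ((g : Mat n) * X * (↑g⁻¹ : Mat n)) k j
      - ((g : Mat n) * X * (↑g⁻¹ : Mat n)) k i * ((g : Mat n) * X * (↑g⁻¹ : Mat n)) l j = 0) :
    D4 X.mulVecLin := by
  intro v w
  by_contra! hc
  have hli : LinearIndependent ℂ ![v, w, X *ᵥ w, X *ᵥ v] := by
    rw [Fintype.linearIndependent_iff]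
    intro g hg
    simp [Fin.sum_univ_succ] at hg
    by_contra! hne
    apply hc (g 0) (g 1) (g 3) (g 2) _ (by rw [← hg]; simp only [mulVecLin_apply]; module)
    obtain ⟨i, hi⟩ := hne
    fin_cases i <;> simp_all
  obtain ⟨P, hP⟩ := exists_GL hinj hli
  have h0 : (P : Mat n) *ᵥ Pi.single i 1 = v := hP 0
  have h1 : (P : Mat n) *ᵥ Pi.single j 1 = w := hP 1
  have h2 : (P : Mat n) *ᵥ Pi.single k 1 = X *ᵥ w := hP 2
  have h3 : (P : Mat n) *ᵥ Pi.single l 1 = X *ᵥ v := hP 3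
  have hlk : l ≠ k := by
    intro e
    have := @hinj 3 2 e
    simp at this
  have key := h P⁻¹
  rw [inv_inv] at key
  have c0 : ((↑P⁻¹ : Mat n) * X * (P : Mat n)) *ᵥ Pi.single i 1 = Pi.single l 1 := by
    rw [← mulVec_mulVec, h0, ← mulVec_mulVec, ← h3, mulVec_mulVec, Units.inv_mul, one_mulVec]
  have c1 : ((↑P⁻¹ : Mat n) * X * (P : Mat n)) *ᵥ Pi.single j 1 = Pi.single k 1 := by
    rw [← mulVec_mulVec, h1, ← mulVec_mulVec, ← h2, mulVec_mulVec, Units.inv_mul, one_mulVec]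
  generalize (↑P⁻¹ : Mat n) * X * (P : Mat n) = Y at *
  have d0 := congrFun c0 l
  have d1 := congrFun c0 k
  have d2 := congrFun c1 k
  simp [Matrix.col_apply, hlk.symm] at d0 d1 d2
  rw [d0, d1, d2] at key
  simp at key

theorem form_mem_C {n : ℕ} (i0 : Fin n) {l : ℂ} (hl : l ≠ 0) {u w : Fin n → ℂ}
    (hc : w ⬝ᵥ u = - (n * l)) :
    ∃ g : GLn n, l • 1 + vecMulVec u w =
      (-l) • ((g : Mat n) * (((-1 : ℂ)) • 1 + vecMulVec (Pi.single i0 1) ((n : ℂ) • Pi.single i0 1)) *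
        (↑g⁻¹ : Mat n)) := by
  have hn0 : (n : ℂ) ≠ 0 := by
    have := i0.pos
    exact_mod_cast this.ne'
  have hu : u ≠ 0 := by
    rintro rfl
    simp [hn0, hl] at hc
  obtain ⟨h, hh⟩ := exists_GL (n := n) (ι := Fin 1) (j := ![i0]) (v := ![u])
    (Function.injective_of_subsingleton _) (by
      rw [linearIndependent_unique_iff]; simpa using hu)
  have hh0 : (h : Mat n) *ᵥ Pi.single i0 1 = u := hh 0
  set w' := w ᵥ* (h : Mat n) with hw'
  have hw0 : w' i0 = -(n * l) := by
    rw [← hc, ← hh0, dotProduct_mulVec, ← hw']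
    simp
  set z : Fin n → ℂ := (-(n * l))⁻¹ • w' - Pi.single i0 1 with hz
  have hnl : -((n : ℂ) * l) ≠ 0 := by simp [hn0, hl]
  have hz0 : z ⬝ᵥ Pi.single i0 1 = 0 := by
    simp only [dotProduct_single, mul_one, hz, Pi.sub_apply, Pi.smul_apply, smul_eq_mul,
      Pi.single_eq_same, hw0]
    rw [inv_mul_cancel₀ hnl, sub_self]
  have hsq : vecMulVec (Pi.single i0 1) z * vecMulVec (Pi.single i0 1) z = 0 := by
    rw [vecMulVec_mul_vecMulVec, hz0]; simp
  let g2 : GLn n := ⟨1 - vecMulVec (Pi.single i0 1) z, 1 + vecMulVec (Pi.single i0 1) z, by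
      rw [sub_mul, mul_add, mul_add, hsq]; simp, by
      rw [add_mul, mul_sub, mul_sub, hsq]; simp⟩
  refine ⟨h * g2, ?_⟩
  rw [conj_form, smul_add, smul_smul, neg_mul_neg, mul_one, ← vecMulVec_smul]
  congr 2
  · rw [Units.val_mul, ← mulVec_mulVec]
    have : (g2 : Mat n) *ᵥ Pi.single i0 1 = Pi.single i0 1 := by
      change (1 - vecMulVec (Pi.single i0 1) z) *ᵥ Pi.single i0 1 = _
      rw [sub_mulVec, vecMulVec_mulVec, hz0, one_mulVec]; simp
    rw [this, hh0]
  · rw [_root_.mul_inv_rev, Units.val_mul, ← vecMul_vecMul]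
    have : ((n : ℂ) • Pi.single i0 1) ᵥ* (↑g2⁻¹ : Mat n) = (-l)⁻¹ • w' := by
      change ((n : ℂ) • Pi.single i0 1) ᵥ* (1 + vecMulVec (Pi.single i0 1) z) = _
      rw [smul_vecMul, vecMul_add, vecMul_vecMulVec, vecMul_one]
      rw [hz]
      ext i
      simp
      field_simp
    rw [this, smul_vecMul, smul_smul, mul_inv_cancel₀ (neg_ne_zero.2 hl), one_smul, hw',
      vecMul_vecMul, Units.mul_inv, vecMul_one]

theorem rank_le_one_form {n : ℕ} {X : Mat n} (h : X.rank ≤ 1) :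
    ∃ u w : Fin n → ℂ, X = vecMulVec u w := by
  rw [Matrix.rank, finrank_le_one_iff] at h
  obtain ⟨⟨u, hu⟩, h⟩ := h
  choose k hk using fun v => h ⟨X.mulVecLin v, v, rfl⟩
  refine ⟨u, fun j => k (Pi.single j 1), ?_⟩
  ext i j
  have := congrFun (congrArg Subtype.val (hk (Pi.single j 1))) i
  simp [Matrix.col_apply] at this
  rw [vecMulVec_apply, ← this, mul_comm]

end matrixPart

theorem stmt_4 (n : ℕ) (hn : 4 ≤ n)
    -- `μ(X) = X_{n,1}·X_{n−1,2} − X_{n−1,1}·X_{n,2}` (1-based indices)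
    (mu : Mat n → ℂ)
    (hmu : mu = fun X =>
      X ⟨n - 1, by omega⟩ ⟨0, by omega⟩ * X ⟨n - 2, by omega⟩ ⟨1, by omega⟩ -
      X ⟨n - 2, by omega⟩ ⟨0, by omega⟩ * X ⟨n - 1, by omega⟩ ⟨1, by omega⟩)
    -- `D = diag(n−1, −1, −1, …, −1)`
    (D : Mat n)
    (hD : D = Matrix.diagonal fun i : Fin n => if (i : ℕ) = 0 then ((n : ℂ) - 1) else -1)
    (V : Set (Mat n))
    (hV : V = {X | X.trace = 0 ∧ ∀ g : GLn n, mu ((↑g : Mat n) * X * (↑g⁻¹ : Mat n)) = 0})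
    (C : Set (Mat n))
    (hC : C = {X | ∃ t : ℂ, t ≠ 0 ∧ ∃ g : GLn n,
      X = t • ((↑g : Mat n) * D * (↑g⁻¹ : Mat n))}) :
    V = zclosure C ∧ V = C ∪ {X : Mat n | X.trace = 0 ∧ X.rank ≤ 1} := by
  have hn0 : (n : ℂ) ≠ 0 := by
    have : n ≠ 0 := by omega
    exact_mod_cast this
  obtain ⟨i0, hi0⟩ : ∃ i : Fin n, i = ⟨0, by omega⟩ := ⟨_, rfl⟩
  have hDf : D = (-1 : ℂ) • 1 + vecMulVec (Pi.single i0 1) ((n : ℂ) • Pi.single i0 1) := by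
    rw [hD]
    ext i j
    simp only [Matrix.diagonal_apply, Matrix.add_apply, Matrix.smul_apply, Matrix.one_apply,
      vecMulVec_apply, Pi.smul_apply, Pi.single_apply, smul_eq_mul, hi0, Fin.ext_iff]
    by_cases hij : (i : ℕ) = j
    · by_cases hi : (i : ℕ) = 0
      · have hj : (j : ℕ) = 0 := by omega
        simp [hi, hj]; ring
      · have hj : (j : ℕ) ≠ 0 := by omega
        simp [hij, hj]
    · by_cases hi : (i : ℕ) = 0
      · have hj : (j : ℕ) ≠ 0 := by omega
        simp [hij, hj]
      · simp [hij, hi]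
  have htrD : D.trace = 0 := by
    rw [hDf, trace_add, trace_smul, trace_one, trace_vecMulVec]
    simp
  have hinj : Function.Injective ![(⟨0, by omega⟩ : Fin n), ⟨1, by omega⟩, ⟨n - 2, by omega⟩,
      ⟨n - 1, by omega⟩] := by
    intro a b hab
    fin_cases a <;> fin_cases b <;> simp [Fin.ext_iff] at hab ⊢ <;> omega
  have hform : ∀ X : Mat n, X ∈ V ↔ X.trace = 0 ∧ ∃ (l : ℂ) (u w : Fin n → ℂ),
      X = l • 1 + vecMulVec u w := by
    intro X
    rw [hV]
    constructor
    · rintro ⟨h1, h2⟩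
      refine ⟨h1, form_of_dep hn (dep_of_mu hinj ?_)⟩
      intro g
      have := h2 g
      rw [hmu] at this
      exact this
    · rintro ⟨h1, l, u, w, h2⟩
      refine ⟨h1, fun g => ?_⟩
      rw [h2, conj_form, hmu]
      have e1 : n - 1 ≠ 0 := by omega
      have e2 : n - 1 ≠ 1 := by omega
      have e3 : n - 2 ≠ 0 := by omega
      have e4 : n - 2 ≠ 1 := by omega
      simp only [Matrix.add_apply, Matrix.smul_apply, Matrix.one_apply, vecMulVec_apply,
        Fin.mk.injEq, e1, e2, e3, e4, if_false, smul_zero, zero_add]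
      ring
  have hCV : C ⊆ V := by
    rintro X hX
    rw [hC] at hX
    obtain ⟨t, ht, g, rfl⟩ := hX
    rw [hform]
    constructor
    · rw [trace_smul, Matrix.trace_mul_comm, ← mul_assoc, Units.inv_mul, one_mul, htrD, smul_zero]
    · rw [hDf, conj_form, smul_add, smul_smul, ← smul_vecMulVec]
      exact ⟨_, _, _, rfl⟩
  have hinC : ∀ (l : ℂ) (u w : Fin n → ℂ), l ≠ 0 → (l • 1 + vecMulVec u w : Mat n).trace = 0 →
      (l • 1 + vecMulVec u w : Mat n) ∈ C := by
    intro l u w hl htr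
    rw [hC]
    refine ⟨-l, neg_ne_zero.2 hl, ?_⟩
    rw [hDf]
    apply form_mem_C i0 hl
    rw [trace_add, trace_smul, trace_one, trace_vecMulVec] at htr
    simp at htr
    rw [dotProduct_comm]
    linear_combination htr
  have hunion : V = C ∪ {X : Mat n | X.trace = 0 ∧ X.rank ≤ 1} := by
    apply Set.Subset.antisymm
    · intro X hX
      obtain ⟨h1, l, u, w, rfl⟩ := (hform X).1 hX
      by_cases hl : l = 0
      · right
        refine ⟨h1, ?_⟩
        rw [hl, zero_smul, zero_add]
        exact rank_vecMulVec_le _ _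
      · left
        exact hinC l u w hl h1
    · rintro X (hX | ⟨h1, h2⟩)
      · exact hCV hX
      · obtain ⟨u, w, rfl⟩ := rank_le_one_form h2
        exact (hform _).2 ⟨h1, 0, u, w, by simp⟩
  refine ⟨?_, hunion⟩
  apply Set.Subset.antisymm
  · intro X hX Z hZ
    obtain ⟨⟨T, hT⟩, hCZ⟩ := hZ
    rw [hunion] at hX
    rcases hX with hX | ⟨h1, h2⟩
    · exact hCZ hX
    have huw : ∃ u w : Fin n → ℂ, w ≠ 0 ∧ X = vecMulVec u w := by
      obtain ⟨u, w, h⟩ := rank_le_one_form h2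
      by_cases hw : w = 0
      · refine ⟨0, Pi.single i0 1, by simp, ?_⟩
        rw [h, hw]; simp
      · exact ⟨u, w, hw, h⟩
    obtain ⟨u, w, hw, rfl⟩ := huw
    obtain ⟨j, hj⟩ := Function.ne_iff.1 hw
    simp only [Pi.zero_apply] at hj
    rw [trace_vecMulVec] at h1
    let Y : ℂ → Mat n := fun s => (-(s * w j / n)) • 1 + vecMulVec (u + s • Pi.single j 1) w
    have hY : ∀ s, s ≠ 0 → Y s ∈ C := by
      intro s hs
      apply hinC
      · simp [hs, hj, hn0]
      · rw [trace_add, trace_smul, trace_one, trace_vecMulVec, add_dotProduct, h1, smul_dotProduct]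
        simp
        field_simp
        ring
    have hYc : Continuous Y := by
      refine continuous_matrix fun a b => ?_
      simp only [Y, Matrix.add_apply, Matrix.smul_apply, vecMulVec_apply, Pi.add_apply,
        Pi.smul_apply, smul_eq_mul]
      fun_prop
    have hY0 : Y 0 = vecMulVec u w := by simp [Y]
    rw [← hY0, hT]
    intro p hp
    have hcl : IsClosed {s : ℂ | MvPolynomial.eval (fun q : Fin n × Fin n => Y s q.1 q.2) p = 0} := by
      refine isClosed_eq ?_ continuous_const
      refine (MvPolynomial.continuous_eval p).comp ?_
      exact continuous_pi fun q => hYc.matrix_elem q.1 q.2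
    have hsub : ({0}ᶜ : Set ℂ) ⊆
        {s : ℂ | MvPolynomial.eval (fun q : Fin n × Fin n => Y s q.1 q.2) p = 0} := by
      intro s hs
      have := hCZ (hY s hs)
      rw [hT] at this
      exact this p hp
    have hd := (dense_compl_singleton (0 : ℂ)).closure_eq
    have := closure_minimal hsub hcl
    rw [hd] at this
    exact this (Set.mem_univ 0)
  · apply Set.sInter_subset_of_mem
    refine ⟨?_, hCV⟩
    let G : Matrix (Fin n) (Fin n) (MvPolynomial (Fin n × Fin n) ℂ) := mvPolynomialX _ _ ℂ
    let Q : GLn n → Matrix (Fin n) (Fin n) (MvPolynomial (Fin n × Fin n) ℂ) := fun g =>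
      (g : Mat n).map MvPolynomial.C * G * (↑g⁻¹ : Mat n).map MvPolynomial.C
    have hQ : ∀ (g : GLn n) (X : Mat n) (a b : Fin n),
        MvPolynomial.eval (fun q => X q.1 q.2) (Q g a b) =
          ((g : Mat n) * X * (↑g⁻¹ : Mat n)) a b := by
      intro g X a b
      simp [Q, G, Matrix.mul_apply, map_sum]
    refine ⟨insert G.trace (Set.range fun g : GLn n =>
      Q g ⟨n - 1, by omega⟩ ⟨0, by omega⟩ * Q g ⟨n - 2, by omega⟩ ⟨1, by omega⟩ -
      Q g ⟨n - 2, by omega⟩ ⟨0, by omega⟩ * Q g ⟨n - 1, by omega⟩ ⟨1, by omega⟩), ?_⟩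
    rw [hV]
    ext X
    have htr : MvPolynomial.eval (fun q => X q.1 q.2) G.trace = X.trace := by
      simp [G, Matrix.trace, map_sum]
    simp only [Set.mem_ofPred_eq, Set.forall_mem_insert, Set.forall_mem_range, htr, map_sub,
      map_mul, hQ, hmu]
end
end

section
/- Let n ≥ 4 and for X ∈ sl_n(ℂ) put μ(X) = X_{n,1}·X_{n−1,2} − X_{n−1,1}·X_{n,2}. Let I be the ideal of the algebra ℂ[sl_n] of polynomial functions on sl_n(ℂ) generated by the polynomial functions X ↦ μ(g·X·g⁻¹) for all g ∈ GL_n(ℂ). Then I is a prime ideal; consequently I equals the full ideal of polynomial functions vanishing on the Zariski closure of the cone {t·g·diag(n−1,−1,…,−1)·g⁻¹ : t ∈ ℂ∖{0}, g ∈ GL_n(ℂ)}. -/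
open Matrix

noncomputable section

/-- The set of traceless `n×n` complex matrices, i.e. `sl_n(ℂ)`. -/
def slS (n : ℕ) : Set (Mat n) := {X | X.trace = 0}

/-- The algebra `ℂ[sl_n]` of polynomial functions on `sl_n(ℂ)`: the subalgebra of all
functions `sl_n → ℂ` generated by the matrix-entry coordinate functions. -/
def polyFns (n : ℕ) : Subalgebra ℂ (↥(slS n) → ℂ) :=
  Algebra.adjoin ℂ {p | ∃ i j : Fin n, p = fun X => X.1 i j}

/-- A subset of `sl_n(ℂ)` is Zariski closed if it is the common zero locus of a family of
polynomial functions on `sl_n(ℂ)`. -/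
def slZclosed (n : ℕ) (C : Set ↥(slS n)) : Prop :=
  ∃ T : Set (↥(slS n) → ℂ), T ⊆ (polyFns n : Set (↥(slS n) → ℂ)) ∧
    C = {X | ∀ p ∈ T, p X = 0}

/-- The Zariski closure of a subset of `sl_n(ℂ)`. -/
def slZclosure (n : ℕ) (C : Set ↥(slS n)) : Set ↥(slS n) :=
  ⋂₀ {D | slZclosed n D ∧ C ⊆ D}


theorem segre_multiset {n : ℕ} {C : Type*} [CommRing C] (Y : Fin n × Fin n → C)
    (hY : ∀ i j k l, Y (i, j) * Y (k, l) = Y (i, l) * Y (k, j)) (N : ℕ) :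
    ∀ s t : Multiset (Fin n × Fin n), s.card = N → s.map Prod.fst = t.map Prod.fst →
      s.map Prod.snd = t.map Prod.snd → (s.map Y).prod = (t.map Y).prod := by
  induction N with
  | zero =>
    intro s t hs h1 h2
    rw [Multiset.card_eq_zero] at hs
    subst hs
    have : t = 0 := by simpa using h1.symm
    subst this; rfl
  | succ N ih =>
    intro s t hs h1 h2
    obtain ⟨⟨i, j⟩, hij⟩ := Multiset.card_pos_iff_exists_mem.mp (by omega : 0 < s.card)
    obtain ⟨s', rfl⟩ := Multiset.exists_cons_of_mem hij
    by_cases hm : (i, j) ∈ t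
    · obtain ⟨t', rfl⟩ := Multiset.exists_cons_of_mem hm
      simp only [Multiset.map_cons, Multiset.prod_cons, Multiset.cons_inj_right,
        Multiset.card_cons] at *
      rw [ih s' t' (by omega) h1 h2]
    · have hi : i ∈ t.map Prod.fst := by rw [← h1]; simp
      have hj : j ∈ t.map Prod.snd := by rw [← h2]; simp
      obtain ⟨⟨i', l⟩, hil, rfl⟩ := Multiset.mem_map.mp hi
      obtain ⟨⟨k, j'⟩, hkj, rfl⟩ := Multiset.mem_map.mp hj
      obtain ⟨t', rfl⟩ := Multiset.exists_cons_of_mem hil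
      rw [Multiset.mem_cons] at hkj
      rcases hkj with hkj | hkj
      · exfalso; apply hm; simp_all
      obtain ⟨t'', rfl⟩ := Multiset.exists_cons_of_mem hkj
      have e : (Multiset.map Y ((i', l) ::ₘ (k, j') ::ₘ t'')).prod =
          Y (i', j') * (Multiset.map Y ((k, l) ::ₘ t'')).prod := by
        simp only [Multiset.map_cons, Multiset.prod_cons]
        rw [← mul_assoc, hY i' l k j', mul_assoc]
      rw [e, Multiset.map_cons, Multiset.prod_cons]
      congr 1
      refine ih s' ((k, l) ::ₘ t'') (by simpa using hs) ?_ ?_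
      · simpa using h1
      · rw [Multiset.cons_swap] at h2; simpa using h2

open MvPolynomial in
theorem segre_kernel {n : ℕ} {C : Type*} [CommRing C] [Algebra ℂ C] (Y : Fin n × Fin n → C)
    (hY : ∀ i j k l, Y (i, j) * Y (k, l) = Y (i, l) * Y (k, j))
    (G : MvPolynomial (Fin n × Fin n) ℂ)
    (hG : aeval (fun p : Fin n × Fin n => (X (Sum.inl p.1) * X (Sum.inr p.2) :
      MvPolynomial (Fin n ⊕ Fin n) ℂ)) G = 0) : aeval Y G = 0 := by
  classical
  let r : (Fin n × Fin n →₀ ℕ) → (Fin n ⊕ Fin n →₀ ℕ) := fun m =>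
    m.mapDomain (fun p => Sum.inl p.1) + m.mapDomain (fun p => Sum.inr p.2)
  have hmon : ∀ m : Fin n × Fin n →₀ ℕ, ∀ c : ℂ,
      aeval (fun p : Fin n × Fin n => (X (Sum.inl p.1) * X (Sum.inr p.2) :
      MvPolynomial (Fin n ⊕ Fin n) ℂ)) (monomial m c) = monomial (r m) c := by
    intro m c
    rw [aeval_monomial, monomial_eq (s := r m), algebraMap_eq]
    congr 1
    rw [Finsupp.prod_add_index' (by simp) (by intros; rw [pow_add]),
      Finsupp.prod_mapDomain_index (by simp) (by intros; rw [pow_add]),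
      Finsupp.prod_mapDomain_index (by simp) (by intros; rw [pow_add]), ← Finsupp.prod_mul]
    simp only [mul_pow]
  have key : ∀ m m' : Fin n × Fin n →₀ ℕ, r m = r m' →
      aeval Y (monomial m (1:ℂ)) = aeval Y (monomial m' (1:ℂ)) := by
    intro m m' h
    have hp : ∀ m : Fin n × Fin n →₀ ℕ, aeval Y (monomial m (1:ℂ)) = (m.toMultiset.map Y).prod := by
      intro m
      rw [aeval_monomial, map_one, one_mul, Finsupp.toMultiset_map, Finsupp.prod_toMultiset,
        Finsupp.prod_mapDomain_index (by simp) (by intros; rw [pow_add])]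
    rw [hp, hp]
    have h1 : ∀ m : Fin n × Fin n →₀ ℕ, ∀ i, r m (Sum.inl i) = m.mapDomain Prod.fst i := by
      intro m i
      have e : m.mapDomain (fun p => (Sum.inl p.1 : Fin n ⊕ Fin n)) =
        (m.mapDomain Prod.fst).mapDomain Sum.inl := by rw [← Finsupp.mapDomain_comp]; rfl
      simp only [r, Finsupp.add_apply, e]
      rw [Finsupp.mapDomain_apply Sum.inl_injective, Nat.add_eq_left]
      apply Finsupp.mapDomain_of_notMem_range
      simp
    have h2 : ∀ m : Fin n × Fin n →₀ ℕ, ∀ i, r m (Sum.inr i) = m.mapDomain Prod.snd i := by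
      intro m i
      have e : m.mapDomain (fun p => (Sum.inr p.2 : Fin n ⊕ Fin n)) =
        (m.mapDomain Prod.snd).mapDomain Sum.inr := by rw [← Finsupp.mapDomain_comp]; rfl
      simp only [r, Finsupp.add_apply, e]
      rw [Finsupp.mapDomain_apply Sum.inr_injective, Nat.add_eq_right]
      apply Finsupp.mapDomain_of_notMem_range
      simp
    refine segre_multiset Y hY _ _ _ rfl ?_ ?_
    · rw [Finsupp.toMultiset_map, Finsupp.toMultiset_map]
      congr 1
      ext i
      rw [← h1, ← h1, h]
    · rw [Finsupp.toMultiset_map, Finsupp.toMultiset_map]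
      congr 1
      ext i
      rw [← h2, ← h2, h]
  let h' : (Fin n ⊕ Fin n →₀ ℕ) → C := fun k =>
    if hk : ∃ m, r m = k then aeval Y (monomial hk.choose (1:ℂ)) else 0
  have hh' : ∀ m, h' (r m) = aeval Y (monomial m (1:ℂ)) := by
    intro m
    have hk : ∃ m', r m' = r m := ⟨m, rfl⟩
    simp only [h', dif_pos hk]
    exact key _ _ hk.choose_spec
  let L : MvPolynomial (Fin n ⊕ Fin n) ℂ →ₗ[ℂ] C := (basisMonomials (Fin n ⊕ Fin n) ℂ).constr ℂ h'
  have hL : ∀ k, L (monomial k 1) = h' k := by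
    intro k
    have := (basisMonomials (Fin n ⊕ Fin n) ℂ).constr_basis ℂ h' k
    rwa [coe_basisMonomials] at this
  have fin : (aeval Y : MvPolynomial (Fin n × Fin n) ℂ →ₐ[ℂ] C).toLinearMap =
      L ∘ₗ (aeval (fun p : Fin n × Fin n => (X (Sum.inl p.1) * X (Sum.inr p.2) :
      MvPolynomial (Fin n ⊕ Fin n) ℂ))).toLinearMap := by
    apply (basisMonomials (Fin n × Fin n) ℂ).ext
    intro m
    simp only [coe_basisMonomials, AlgHom.toLinearMap_apply, LinearMap.comp_apply]
    rw [hmon, hL, hh']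
  have := LinearMap.congr_fun fin G
  simp only [AlgHom.toLinearMap_apply, LinearMap.comp_apply, hG, map_zero] at this
  exact this

section
set_option linter.unusedSectionVars false
variable {B : Type*} [CommRing B] [Algebra ℂ B] {n : ℕ}

theorem aux_cancel (c : ℂ) (hc : c ≠ 0) (x : B) (h : algebraMap ℂ B c * x = 0) : x = 0 := by
  have : algebraMap ℂ B c⁻¹ * (algebraMap ℂ B c * x) = 0 := by rw [h, mul_zero]
  rwa [← mul_assoc, ← map_mul, inv_mul_cancel₀ hc, map_one, one_mul] at this

/-- corrected quadric -/
def E2 (X P : Matrix (Fin n) (Fin n) B) (q : B) (i k a b : Fin n) : B :=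
  X i a * X k b - X i b * X k a +
    ((1 : Matrix (Fin n) (Fin n) B) i a * P k b + (1 : Matrix (Fin n) (Fin n) B) k b * P i a
      - (1 : Matrix (Fin n) (Fin n) B) i b * P k a - (1 : Matrix (Fin n) (Fin n) B) k a * P i b) +
    ((1 : Matrix (Fin n) (Fin n) B) i a * (1 : Matrix (Fin n) (Fin n) B) k b
      - (1 : Matrix (Fin n) (Fin n) B) i b * (1 : Matrix (Fin n) (Fin n) B) k a) * q

structure QData (X P : Matrix (Fin n) (Fin n) B) (q : B) : Prop where
  trX : X.trace = 0
  trP : P.trace = 0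
  comm : X * P = P * X
  sq : X * X = ((n : B) - 2) • P + (((n : B) - 1) * q) • (1 : Matrix (Fin n) (Fin n) B)
  e2 : ∀ i k a b, E2 X P q i k a b = 0

theorem QData.transpose {X P : Matrix (Fin n) (Fin n) B} {q : B} (h : QData X P q) :
    QData Xᵀ Pᵀ q where
  trX := by simpa using h.trX
  trP := by simpa using h.trP
  comm := by rw [← transpose_mul, ← transpose_mul, h.comm]
  sq := by rw [← transpose_mul, h.sq]; simp
  e2 i k a b := by
    have := h.e2 a b i k
    simp only [E2, transpose_apply] at this ⊢
    have s : ∀ i j : Fin n, (1 : Matrix (Fin n) (Fin n) B) i j = (1 : Matrix (Fin n) (Fin n) B) j i := by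
      intro i j; simp [Matrix.one_apply, eq_comm]
    rw [s i a, s k b, s i b, s k a]
    rw [← this]; ring

theorem QData.R {X P : Matrix (Fin n) (Fin n) B} {q : B} (h : QData X P q) (m i a b : Fin n) :
    ((n : B) - 2) * (X i a * P m b - X i b * P m a) + (X m b * P i a - X m a * P i b)
     + ((n : B) - 1) * q * (X i a * (1 : Matrix (Fin n) (Fin n) B) m b - X i b * (1 : Matrix (Fin n) (Fin n) B) m a)
     + (1 : Matrix (Fin n) (Fin n) B) i a * (X * P) m b - (1 : Matrix (Fin n) (Fin n) B) i b * (X * P) m a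
     + q * ((1 : Matrix (Fin n) (Fin n) B) i a * X m b - (1 : Matrix (Fin n) (Fin n) B) i b * X m a) = 0 := by
  have h1 : ∑ k, X m k * E2 X P q i k a b = 0 := by simp [h.e2]
  have h2 : ∑ k, X m k * E2 X P q i k a b =
      X i a * (X * X) m b - X i b * (X * X) m a +
      ((1 : Matrix (Fin n) (Fin n) B) i a * (X * P) m b + (X * (1 : Matrix (Fin n) (Fin n) B)) m b * P i a
        - (1 : Matrix (Fin n) (Fin n) B) i b * (X * P) m a - (X * (1 : Matrix (Fin n) (Fin n) B)) m a * P i b) +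
      ((1 : Matrix (Fin n) (Fin n) B) i a * (X * (1 : Matrix (Fin n) (Fin n) B)) m b
        - (1 : Matrix (Fin n) (Fin n) B) i b * (X * (1 : Matrix (Fin n) (Fin n) B)) m a) * q := by
    simp only [Matrix.mul_apply, Finset.mul_sum, Finset.sum_mul, ← Finset.sum_sub_distrib,
      ← Finset.sum_add_distrib, E2]
    refine Finset.sum_congr rfl fun k _ => ?_
    ring
  rw [h2, h.sq] at h1
  simp only [Matrix.mul_one, Matrix.add_apply, Matrix.smul_apply, smul_eq_mul] at h1
  rw [← h1]; ring

theorem QData.S1 {X P : Matrix (Fin n) (Fin n) B} {q : B} (h : QData X P q) (U : Matrix (Fin n) (Fin n) B)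
    (hU : U = X * P - (((n : B) - 2) * q) • X) (m i a b : Fin n) :
    ((n : B) - 3) * ((X i a * P m b - X i b * P m a) - (X m b * P i a - X m a * P i b))
     + (1 : Matrix (Fin n) (Fin n) B) i a * U m b - (1 : Matrix (Fin n) (Fin n) B) i b * U m a
     + (1 : Matrix (Fin n) (Fin n) B) m a * U i b - (1 : Matrix (Fin n) (Fin n) B) m b * U i a = 0 := by
  have hx : X * P = (((n : B) - 2) * q) • X + U := by rw [hU]; abel
  have r1 := h.R m i a b
  have r2 := h.R i m a b
  rw [hx] at r1 r2
  simp only [Matrix.add_apply, Matrix.smul_apply, smul_eq_mul] at r1 r2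
  linear_combination r1 + r2

theorem QData.U_eq {X P : Matrix (Fin n) (Fin n) B} {q : B} (h : QData X P q) (U : Matrix (Fin n) (Fin n) B)
    (hU : U = X * P - (((n : B) - 2) * q) • X) :
    (n : B) • U = U.trace • (1 : Matrix (Fin n) (Fin n) B) := by
  ext m b
  have h1 := Finset.sum_congr rfl (fun i (_ : i ∈ Finset.univ) => h.S1 U hU m i i b)
  have h2 : ∑ i : Fin n, (((n : B) - 3) * ((X i i * P m b - X i b * P m i) - (X m b * P i i - X m i * P i b))
     + (1 : Matrix (Fin n) (Fin n) B) i i * U m b - (1 : Matrix (Fin n) (Fin n) B) i b * U m i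
     + (1 : Matrix (Fin n) (Fin n) B) m i * U i b - (1 : Matrix (Fin n) (Fin n) B) m b * U i i)
    = ((n : B) - 3) * ((X.trace * P m b - (P * X) m b) - (X m b * P.trace - (X * P) m b))
     + (1 : Matrix (Fin n) (Fin n) B).trace * U m b - (U * (1 : Matrix (Fin n) (Fin n) B)) m b + ((1 : Matrix (Fin n) (Fin n) B) * U) m b
       - (1 : Matrix (Fin n) (Fin n) B) m b * U.trace := by
    simp only [Matrix.mul_apply, Matrix.trace, Matrix.diag_apply, Finset.mul_sum, Finset.sum_mul,
      ← Finset.sum_sub_distrib, ← Finset.sum_add_distrib]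
    refine Finset.sum_congr rfl fun k _ => ?_
    ring
  rw [h2, h.trX, h.trP, h.comm] at h1
  simp only [Matrix.trace_one, Fintype.card_fin, Matrix.mul_one, Matrix.one_mul,
    Finset.sum_const_zero] at h1
  simp only [Matrix.smul_apply, smul_eq_mul]
  linear_combination h1

theorem QData.XP (hn : 4 ≤ n) {X P : Matrix (Fin n) (Fin n) B} {q : B} (h : QData X P q) (r : B)
    (hr : (n : B) * ((n : B) - 1) * r = (X * P).trace) :
    X * P = (((n : B) - 2) * q) • X + (((n : B) - 1) * r) • (1 : Matrix (Fin n) (Fin n) B) := by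
  have h1 := h.U_eq _ rfl
  ext i j
  have h2 := congrFun (congrFun h1 i) j
  simp only [Matrix.trace_sub, Matrix.trace_smul, h.trX, Matrix.smul_apply, Matrix.sub_apply,
    Matrix.add_apply, smul_eq_mul, mul_zero, sub_zero, ← hr] at h2 ⊢
  rw [← sub_eq_zero]
  apply aux_cancel (n : ℂ) (by norm_cast; omega)
  rw [map_natCast]
  linear_combination h2

theorem QData.half (hn : 4 ≤ n) {X P : Matrix (Fin n) (Fin n) B} {q : B} (h : QData X P q) (r : B)
    (hr : (n : B) * ((n : B) - 1) * r = (X * P).trace) (m i a b : Fin n) :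
    (X i a * P m b - X i b * P m a) - (X m b * P i a - X m a * P i b) = 0 := by
  apply aux_cancel ((n : ℂ) - 3) (by
    have : ((n - 3 : ℕ) : ℂ) ≠ 0 := by norm_cast; omega
    rwa [Nat.cast_sub (by omega)] at this)
  rw [map_sub, map_natCast, map_ofNat]
  have := h.S1 _ rfl m i a b
  rw [h.XP hn r hr] at this
  simp only [Matrix.add_apply, Matrix.sub_apply, Matrix.smul_apply, smul_eq_mul] at this
  linear_combination this

theorem QData.K (hn : 4 ≤ n) {X P : Matrix (Fin n) (Fin n) B} {q : B} (h : QData X P q) (r : B)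
    (hr : (n : B) * ((n : B) - 1) * r = (X * P).trace) (i j k l : Fin n) :
    X i j * P k l = X k l * P i j := by
  have h1 := h.half hn r hr k i j l
  have h2 := h.transpose.half hn r (by
    rw [hr, ← transpose_mul, trace_transpose, h.comm]) l j i k
  simp only [transpose_apply] at h2
  rw [← sub_eq_zero]
  apply aux_cancel 2 (by norm_num)
  rw [map_ofNat]
  linear_combination h1 + h2

theorem QData.G (hn : 4 ≤ n) {X P : Matrix (Fin n) (Fin n) B} {q : B} (h : QData X P q) (r : B)
    (hr : (n : B) * ((n : B) - 1) * r = (X * P).trace) (i m a b : Fin n) :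
    X i a * P m b - X i b * P m a + q * (X i a * (1 : Matrix (Fin n) (Fin n) B) m b
      - X i b * (1 : Matrix (Fin n) (Fin n) B) m a + (1 : Matrix (Fin n) (Fin n) B) i a * X m b
      - (1 : Matrix (Fin n) (Fin n) B) i b * X m a)
      + r * ((1 : Matrix (Fin n) (Fin n) B) i a * (1 : Matrix (Fin n) (Fin n) B) m b
      - (1 : Matrix (Fin n) (Fin n) B) i b * (1 : Matrix (Fin n) (Fin n) B) m a) = 0 := by
  apply aux_cancel ((n : ℂ) - 1) (by
    have : ((n - 1 : ℕ) : ℂ) ≠ 0 := by norm_cast; omega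
    rwa [Nat.cast_sub (by omega), Nat.cast_one] at this)
  rw [map_sub, map_natCast, map_one]
  have h1 := h.R m i a b
  rw [h.XP hn r hr] at h1
  simp only [Matrix.add_apply, Matrix.smul_apply, smul_eq_mul] at h1
  linear_combination h1 + h.K hn r hr i a m b - h.K hn r hr i b m a
end

section
variable {B : Type*} [CommRing B] [Algebra ℂ B] {n : ℕ}

def qOf (X : Matrix (Fin n) (Fin n) B) : B :=
  algebraMap ℂ B (1 / ((n : ℂ) * ((n : ℂ) - 1))) * (X * X).trace

def POf (X : Matrix (Fin n) (Fin n) B) : Matrix (Fin n) (Fin n) B :=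
  (algebraMap ℂ B (1 / ((n : ℂ) - 2))) •
    (X * X - (((n : B) - 1) * qOf X) • (1 : Matrix (Fin n) (Fin n) B))

theorem qOf_map {C : Type*} [CommRing C] [Algebra ℂ C] (f : B →ₐ[ℂ] C)
    (X : Matrix (Fin n) (Fin n) B) : f (qOf X) = qOf (X.map f) := by
  simp [qOf, Matrix.trace, Matrix.mul_apply]

theorem POf_map {C : Type*} [CommRing C] [Algebra ℂ C] (f : B →ₐ[ℂ] C)
    (X : Matrix (Fin n) (Fin n) B) (i j : Fin n) : f (POf X i j) = POf (X.map f) i j := by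
  have h1 : f ((1 : Matrix (Fin n) (Fin n) B) i j) = (1 : Matrix (Fin n) (Fin n) C) i j := by
    simp only [Matrix.one_apply]; split_ifs <;> simp
  simp only [POf, Matrix.smul_apply, Matrix.sub_apply, smul_eq_mul, map_mul, map_sub, h1, qOf_map,
    AlgHom.commutes, map_natCast, map_one]
  simp [Matrix.mul_apply]

theorem E2_map {C : Type*} [CommRing C] [Algebra ℂ C] (f : B →ₐ[ℂ] C)
    (X : Matrix (Fin n) (Fin n) B) (i k a b : Fin n) :
    f (E2 X (POf X) (qOf X) i k a b) = E2 (X.map f) (POf (X.map f)) (qOf (X.map f)) i k a b := by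
  have h1 : ∀ i j, f ((1 : Matrix (Fin n) (Fin n) B) i j) = (1 : Matrix (Fin n) (Fin n) C) i j := by
    intro i j
    simp only [Matrix.one_apply]; split_ifs <;> simp
  simp only [E2, map_add, map_sub, map_mul, POf_map, qOf_map, h1, Matrix.map_apply]

theorem nat_sub_ne (n k : ℕ) (h : k < n) : (n : ℂ) - k ≠ 0 := by
  rw [← Nat.cast_sub h.le]; norm_cast; omega

theorem alg_inv (c : ℂ) (hc : c ≠ 0) : algebraMap ℂ B c * algebraMap ℂ B (1 / c) = 1 := by
  rw [← map_mul, mul_one_div_cancel hc, map_one]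

theorem qOf_spec (hn : 4 ≤ n) (X : Matrix (Fin n) (Fin n) B) :
    (n : B) * ((n : B) - 1) * qOf X = (X * X).trace := by
  have := alg_inv (B := B) ((n : ℂ) * ((n : ℂ) - 1))
    (mul_ne_zero (by simpa using nat_sub_ne n 0 (by omega)) (by simpa using nat_sub_ne n 1 (by omega)))
  rw [map_mul, map_sub, map_natCast, map_one] at this
  rw [qOf, ← mul_assoc, this, one_mul]

theorem POf_spec (hn : 4 ≤ n) (X : Matrix (Fin n) (Fin n) B) :
    ((n : B) - 2) • POf X = X * X - (((n : B) - 1) * qOf X) • (1 : Matrix (Fin n) (Fin n) B) := by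
  have := alg_inv (B := B) ((n : ℂ) - 2) (by simpa using nat_sub_ne n 2 (by omega))
  rw [map_sub, map_natCast, map_ofNat] at this
  rw [POf, smul_smul, this, one_smul]

theorem QData.of (hn : 4 ≤ n) (X : Matrix (Fin n) (Fin n) B) (htr : X.trace = 0)
    (h : ∀ i k a b, E2 X (POf X) (qOf X) i k a b = 0) : QData X (POf X) (qOf X) where
  trX := htr
  trP := by
    rw [POf, Matrix.trace_smul, Matrix.trace_sub, ← qOf_spec hn X, Matrix.trace_smul,
      Matrix.trace_one, Fintype.card_fin]
    simp only [smul_eq_mul]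
    ring
  comm := by
    rw [POf]
    simp [Matrix.mul_sub, Matrix.sub_mul, Matrix.mul_assoc]
  sq := by rw [POf_spec hn]; abel
  e2 := h

end

abbrev SS (n : ℕ) := MvPolynomial (Fin n × Fin n) ℂ

def xs (n : ℕ) : Matrix (Fin n) (Fin n) (SS n) := Matrix.of fun i j => MvPolynomial.X (i, j)

def II (n : ℕ) : Ideal (SS n) :=
  Ideal.span ({(xs n).trace} ∪
    {z | ∃ i k a b, z = E2 (xs n) (POf (xs n)) (qOf (xs n)) i k a b})

abbrev BB (n : ℕ) := SS n ⧸ II n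

abbrev mkB (n : ℕ) : SS n →ₐ[ℂ] BB n := Ideal.Quotient.mkₐ ℂ (II n)

def xb (n : ℕ) : Matrix (Fin n) (Fin n) (BB n) := (xs n).map (mkB n)

theorem mkB_zero {n : ℕ} {f : SS n} : mkB n f = 0 ↔ f ∈ II n := Ideal.Quotient.eq_zero_iff_mem

theorem qdataB (n : ℕ) (hn : 4 ≤ n) : QData (xb n) (POf (xb n)) (qOf (xb n)) := by
  apply QData.of hn
  · have : mkB n (xs n).trace = 0 := mkB_zero.2 (Ideal.subset_span (Or.inl rfl))
    simpa [xb, Matrix.trace] using this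
  · intro i k a b
    rw [xb, ← E2_map, mkB_zero]
    exact Ideal.subset_span (Or.inr ⟨i, k, a, b, rfl⟩)

/-- the element `s³` -/
def rB (n : ℕ) : BB n :=
  algebraMap ℂ (BB n) (1 / ((n : ℂ) * ((n : ℂ) - 1))) * (xb n * POf (xb n)).trace

theorem rB_spec (n : ℕ) (hn : 4 ≤ n) :
    (n : BB n) * ((n : BB n) - 1) * rB n = (xb n * POf (xb n)).trace := by
  have := alg_inv (B := BB n) ((n : ℂ) * ((n : ℂ) - 1))
    (mul_ne_zero (by simpa using nat_sub_ne n 0 (by omega)) (by simpa using nat_sub_ne n 1 (by omega)))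
  rw [map_mul, map_sub, map_natCast, map_one] at this
  rw [rB, ← mul_assoc, this, one_mul]

open MvPolynomial in
open scoped Classical in
/-- the multiplication-by-`s` map -/
def sig (n : ℕ) : SS n →ₗ[ℂ] BB n :=
  (basisMonomials (Fin n × Fin n) ℂ).constr ℂ fun m =>
    if h : ∃ p, m p ≠ 0 then
      POf (xb n) h.choose.1 h.choose.2 * mkB n (monomial (m - Finsupp.single h.choose 1) 1)
    else 0

open MvPolynomial in
theorem sig_X (n : ℕ) (hn : 4 ≤ n) (p : Fin n × Fin n) (f : SS n) :
    sig n (X p * f) = POf (xb n) p.1 p.2 * mkB n f := by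
  classical
  have key : (sig n) ∘ₗ (LinearMap.mulLeft ℂ (X p)) =
      (LinearMap.mulLeft ℂ (POf (xb n) p.1 p.2)) ∘ₗ (mkB n).toLinearMap := by
    apply (basisMonomials (Fin n × Fin n) ℂ).ext
    intro m
    simp only [coe_basisMonomials, AlgHom.toLinearMap_apply, LinearMap.comp_apply,
      LinearMap.mulLeft_apply]
    have e : X p * monomial m (1:ℂ) = monomial (Finsupp.single p 1 + m) 1 := by
      rw [X, monomial_mul, one_mul]
    rw [e]
    have := (basisMonomials (Fin n × Fin n) ℂ).constr_basis ℂ (fun m =>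
      if h : ∃ p, m p ≠ 0 then
      POf (xb n) h.choose.1 h.choose.2 * mkB n (monomial (m - Finsupp.single h.choose 1) 1)
      else 0) (Finsupp.single p 1 + m)
    rw [coe_basisMonomials] at this
    rw [sig, this]
    have h : ∃ r, (Finsupp.single p 1 + m : Fin n × Fin n →₀ ℕ) r ≠ 0 := ⟨p, by simp⟩
    rw [dif_pos h]
    have hr := h.choose_spec
    generalize h.choose = r at hr
    by_cases hpr : r = p
    · subst hpr; simp
    · have hm : m r ≠ 0 := by
        simpa [Finsupp.single_apply, Ne.symm hpr] using hr
      obtain ⟨m', rfl⟩ : ∃ m', m = Finsupp.single r 1 + m' := by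
        refine ⟨m - Finsupp.single r 1, ?_⟩
        rw [add_tsub_cancel_of_le]
        rw [Finsupp.single_le_iff]; omega
      have e1 : Finsupp.single p 1 + (Finsupp.single r 1 + m') - Finsupp.single r 1 =
          Finsupp.single p 1 + m' := by
        rw [add_left_comm, add_tsub_cancel_left]
      have e2 : ∀ t : Fin n × Fin n, mkB n (monomial (Finsupp.single t 1 + m') 1) =
          xb n t.1 t.2 * mkB n (monomial m' 1) := by
        intro t
        have : (monomial (Finsupp.single t 1 + m') 1 : SS n) = X t * monomial m' 1 := by
          rw [X, monomial_mul, one_mul]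
        rw [this, map_mul]; rfl
      rw [e1, e2, e2]
      have hd := qdataB n hn
      have hK := hd.K hn _ (rB_spec n hn) p.1 p.2 r.1 r.2
      linear_combination (mkB n (monomial m' 1)) * hK
  exact LinearMap.congr_fun key f

def Good {n : ℕ} (g : SS n) : Prop := ∀ f, sig n (f * g) = mkB n f * sig n g

theorem Good.X (n : ℕ) (hn : 4 ≤ n) (i j : Fin n) (h : SS n) : Good (xs n i j * h) := by
  intro f
  have e : f * (xs n i j * h) = MvPolynomial.X (i, j) * (f * h) := by
    simp only [xs, Matrix.of_apply]; ring
  have e' : xs n i j * h = MvPolynomial.X (i, j) * h := rfl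
  rw [e, e', sig_X n hn, sig_X n hn, map_mul]; ring

theorem Good.add {n : ℕ} {g h : SS n} (hg : Good g) (hh : Good h) : Good (g + h) := by
  intro f; rw [mul_add, map_add, map_add, hg, hh]; ring

theorem Good.mul {n : ℕ} {g : SS n} (hg : Good g) (c : SS n) : Good (c * g) := by
  intro f; rw [← mul_assoc, hg, hg, map_mul]; ring

theorem Good.neg {n : ℕ} {g : SS n} (hg : Good g) : Good (-g) := by
  have := hg.mul (-1); rwa [neg_one_mul] at this

theorem Good.sub {n : ℕ} {g h : SS n} (hg : Good g) (hh : Good h) : Good (g - h) := by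
  rw [sub_eq_add_neg]; exact hg.add hh.neg

theorem Good.sum {n : ℕ} {ι : Type*} (s : Finset ι) (g : ι → SS n) (hg : ∀ i, Good (g i)) :
    Good (∑ i ∈ s, g i) := by
  intro f; rw [Finset.mul_sum, map_sum, map_sum, Finset.mul_sum]
  exact Finset.sum_congr rfl fun i _ => hg i f

theorem good_xs (n : ℕ) (hn : 4 ≤ n) (i j : Fin n) : Good (xs n i j) := by
  have := Good.X n hn i j 1; rwa [mul_one] at this

theorem sig_xs (n : ℕ) (hn : 4 ≤ n) (i j : Fin n) : sig n (xs n i j) = POf (xb n) i j := by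
  have := sig_X n hn (i, j) 1; rwa [mul_one, map_one, mul_one] at this

theorem sig_xx (n : ℕ) (hn : 4 ≤ n) (i j k l : Fin n) :
    sig n (xs n i j * xs n k l) = POf (xb n) i j * xb n k l := sig_X n hn (i, j) _

theorem good_sq (n : ℕ) (hn : 4 ≤ n) (i j : Fin n) : Good ((xs n * xs n) i j) := by
  rw [Matrix.mul_apply]; exact Good.sum _ _ fun k => Good.X n hn _ _ _

theorem sig_sq (n : ℕ) (hn : 4 ≤ n) (i j : Fin n) :
    sig n ((xs n * xs n) i j) = (xb n * POf (xb n)) i j := by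
  rw [(qdataB n hn).comm, Matrix.mul_apply, Matrix.mul_apply, map_sum]
  exact Finset.sum_congr rfl fun k _ => sig_xx n hn _ _ _ _

theorem good_tr (n : ℕ) (hn : 4 ≤ n) : Good (xs n * xs n).trace :=
  Good.sum _ _ fun _ => good_sq n hn _ _

theorem good_q (n : ℕ) (hn : 4 ≤ n) : Good (qOf (xs n)) := (good_tr n hn).mul _

theorem sig_q (n : ℕ) (hn : 4 ≤ n) : sig n (qOf (xs n)) = rB n := by
  rw [qOf, good_tr n hn, rB, AlgHom.commutes]
  congr 1
  rw [Matrix.trace, map_sum]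
  exact Finset.sum_congr rfl fun k _ => sig_sq n hn _ _

theorem mkB_one (n : ℕ) (i j : Fin n) : mkB n ((1 : Matrix (Fin n) (Fin n) (SS n)) i j) =
    (1 : Matrix (Fin n) (Fin n) (BB n)) i j := by
  simp only [Matrix.one_apply]; split_ifs <;> simp

theorem POf_xs (n : ℕ) (i j : Fin n) : POf (xs n) i j =
    algebraMap ℂ (SS n) (1 / ((n : ℂ) - 2)) * ((xs n * xs n) i j -
      (((n : SS n) - 1) * (1 : Matrix (Fin n) (Fin n) (SS n)) i j) * qOf (xs n)) := by
  simp only [POf, Matrix.smul_apply, Matrix.sub_apply, smul_eq_mul]; ring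

theorem good_P (n : ℕ) (hn : 4 ≤ n) (i j : Fin n) : Good (POf (xs n) i j) := by
  rw [POf_xs]
  exact ((good_sq n hn i j).sub ((good_q n hn).mul _)).mul _

theorem sig_P (n : ℕ) (hn : 4 ≤ n) (i j : Fin n) :
    sig n (POf (xs n) i j) = qOf (xb n) * xb n i j := by
  rw [POf_xs, ((good_sq n hn i j).sub ((good_q n hn).mul _)), map_sub, sig_sq n hn,
    good_q n hn, sig_q n hn, (qdataB n hn).XP hn _ (rB_spec n hn), AlgHom.commutes, map_mul,
    mkB_one, map_sub, map_natCast, map_one]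
  have := alg_inv (B := BB n) ((n : ℂ) - 2) (by simpa using nat_sub_ne n 2 (by omega))
  rw [map_sub, map_natCast, map_ofNat] at this
  simp only [Matrix.add_apply, Matrix.smul_apply, smul_eq_mul]
  linear_combination (qOf (xb n) * xb n i j) * this

theorem good_E2 (n : ℕ) (hn : 4 ≤ n) (i k a b : Fin n) :
    Good (E2 (xs n) (POf (xs n)) (qOf (xs n)) i k a b) := by
  have hP := good_P n hn
  refine Good.add (Good.add (Good.sub ?_ ?_) (Good.sub (Good.sub (Good.add ?_ ?_) ?_) ?_)) ?_
  · exact Good.X n hn _ _ _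
  · exact Good.X n hn _ _ _
  · exact (hP _ _).mul _
  · exact (hP _ _).mul _
  · exact (hP _ _).mul _
  · exact (hP _ _).mul _
  · exact (good_q n hn).mul _

theorem sig_E2 (n : ℕ) (hn : 4 ≤ n) (i k a b : Fin n) :
    sig n (E2 (xs n) (POf (xs n)) (qOf (xs n)) i k a b) = 0 := by
  have hP := good_P n hn
  have hd := qdataB n hn
  simp only [E2, map_add, map_sub, sig_xx n hn]
  rw [hP, hP, hP, hP, good_q n hn]
  simp only [sig_P n hn, sig_q n hn, map_sub, map_mul, mkB_one]
  linear_combination hd.G hn _ (rB_spec n hn) i k a b - hd.K hn _ (rB_spec n hn) i a k b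
    + hd.K hn _ (rB_spec n hn) i b k a

theorem sig_II (n : ℕ) (hn : 4 ≤ n) (z : SS n) (hz : z ∈ II n) : sig n z = 0 := by
  have : ∀ f, sig n (f * z) = 0 := by
    refine Submodule.span_induction (p := fun z _ => ∀ f, sig n (f * z) = 0) ?_ ?_ ?_ ?_ hz
    · rintro z (rfl | ⟨i, k, a, b, rfl⟩) f
      · have hg : Good (xs n).trace := Good.sum _ _ fun k => good_xs n hn _ _
        rw [hg, Matrix.trace, map_sum]
        have := (qdataB n hn).trP
        simp only [Matrix.diag_apply, sig_xs n hn]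
        rw [Matrix.trace] at this
        simp only [Matrix.diag_apply] at this
        rw [this, mul_zero]
      · rw [good_E2 n hn, sig_E2 n hn, mul_zero]
    · intro f; simp
    · intro x y _ _ hx hy f; rw [mul_add, map_add, hx, hy, add_zero]
    · intro c x _ hx f; rw [smul_eq_mul, ← mul_assoc, hx]
  have h := this 1
  rwa [one_mul] at h

abbrev CC (n : ℕ) := QuadraticAlgebra (BB n) (qOf (xb n)) 0

def KK (n : ℕ) : Ideal (CC n) :=
  Ideal.span {z | ∃ i j, z = ⟨-POf (xb n) i j, xb n i j⟩}

theorem KK_inj (n : ℕ) (hn : 4 ≤ n) (b : BB n) (hb : (⟨b, 0⟩ : CC n) ∈ KK n) : b = 0 := by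
  have key : ∀ z ∈ KK n, ∃ f f' : SS n, mkB n f = z.im ∧ sig n f = - z.re ∧ mkB n f' = z.re ∧
      sig n f' = - (qOf (xb n) * z.im) ∧ Good f ∧ Good f' := by
    intro z hz
    refine Submodule.span_induction (p := fun z _ => ∃ f f' : SS n, mkB n f = z.im ∧
      sig n f = - z.re ∧ mkB n f' = z.re ∧
      sig n f' = - (qOf (xb n) * z.im) ∧ Good f ∧ Good f') ?_ ?_ ?_ ?_ hz
    · rintro z ⟨i, j, rfl⟩
      refine ⟨xs n i j, - POf (xs n) i j, rfl, ?_, ?_, ?_, good_xs n hn _ _, (good_P n hn _ _).neg⟩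
      · rw [sig_xs n hn, neg_neg]
      · rw [map_neg, POf_map]; rfl
      · rw [map_neg, sig_P n hn]
    · refine ⟨0, 0, ?_, ?_, ?_, ?_, ?_, ?_⟩ <;> simp [Good]
    · rintro x y _ _ ⟨f, f', h1, h2, h3, h4, h5, h6⟩ ⟨g, g', k1, k2, k3, k4, k5, k6⟩
      refine ⟨f + g, f' + g', ?_, ?_, ?_, ?_, h5.add k5, h6.add k6⟩
      · rw [map_add, h1, k1]; rfl
      · rw [map_add, h2, k2, QuadraticAlgebra.re_add]; ring
      · rw [map_add, h3, k3]; rfl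
      · rw [map_add, h4, k4, QuadraticAlgebra.im_add]; ring
    · rintro c x _ ⟨f, f', h1, h2, h3, h4, h5, h6⟩
      obtain ⟨α, hα⟩ := Ideal.Quotient.mkₐ_surjective ℂ (II n) c.re
      obtain ⟨β, hβ⟩ := Ideal.Quotient.mkₐ_surjective ℂ (II n) c.im
      have hα : mkB n α = c.re := hα
      have hβ : mkB n β = c.im := hβ
      have hq : mkB n (qOf (xs n)) = qOf (xb n) := by rw [qOf_map]; rfl
      refine ⟨α * f + β * f', α * f' + (β * qOf (xs n)) * f, ?_, ?_, ?_, ?_,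
        (h5.mul _).add (h6.mul _), (h6.mul _).add (h5.mul _)⟩
      · rw [map_add, map_mul, map_mul, h1, h3, hα, hβ, smul_eq_mul, QuadraticAlgebra.im_mul]; ring
      · rw [map_add, h5, h6, h2, h4, hα, hβ, smul_eq_mul, QuadraticAlgebra.re_mul]; ring
      · rw [map_add, map_mul, map_mul, map_mul, hq, h1, h3, hα, hβ, smul_eq_mul,
          QuadraticAlgebra.re_mul]; ring
      · rw [map_add, h6, h5, map_mul, hq, h2, h4, hα, hβ, smul_eq_mul, QuadraticAlgebra.im_mul]
        ring
  obtain ⟨f, f', h1, h2, -⟩ := key _ hb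
  have := sig_II n hn f (mkB_zero.1 h1)
  rw [h2] at this
  simpa using this

open MvPolynomial in
/-- Main algebraic statement. -/
theorem main_alg (n : ℕ) (hn : 4 ≤ n) (F : SS n)
    (hF : aeval (fun p : Fin n × Fin n => (X (Sum.inl p.1) * X (Sum.inr p.2) -
      (if p.1 = p.2 then C (1 / (n : ℂ)) * ∑ k, X (Sum.inl k) * X (Sum.inr k) else 0) :
      MvPolynomial (Fin n ⊕ Fin n) ℂ)) F = 0) : F ∈ II n := by
  let C' := CC n ⧸ KK n
  let w : C' := Ideal.Quotient.mk (KK n) ⟨0, 1⟩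
  let ι : BB n →ₐ[ℂ] C' := (Ideal.Quotient.mkₐ ℂ (KK n)).comp
    ((Algebra.ofId (BB n) (CC n)).restrictScalars ℂ)
  have hι : ∀ b, ι b = Ideal.Quotient.mk (KK n) ⟨b, 0⟩ := fun b => rfl
  have hww : w * w = ι (qOf (xb n)) := by
    rw [hι, ← map_mul]; congr 1; ext <;> simp
  have hwx : ∀ i j, w * ι (xb n i j) = ι (POf (xb n) i j) := by
    intro i j
    rw [hι, hι, ← map_mul, Ideal.Quotient.eq]
    apply Ideal.subset_span
    refine ⟨i, j, ?_⟩
    ext <;> simp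
  let Y : Fin n × Fin n → C' := fun p => ι (xb n p.1 p.2) + if p.1 = p.2 then w else 0
  have hY : ∀ i j k l, Y (i, j) * Y (k, l) = Y (i, l) * Y (k, j) := by
    intro i j k l
    have h := congrArg ι ((qdataB n hn).e2 i k j l)
    have h1 : ∀ i j, ι ((1 : Matrix (Fin n) (Fin n) (BB n)) i j) = if i = j then 1 else 0 := by
      intro i j
      simp only [Matrix.one_apply]; split_ifs <;> simp
    have h2 : ∀ i j : Fin n, (if i = j then w else 0) = (if i = j then 1 else 0) * w := by
      intro i j; simp
    simp only [E2, map_add, map_sub, map_mul, map_zero, ← hwx, ← hww, h1] at h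
    simp only [Y, h2]
    linear_combination h
  have htr : ∑ k, Y (k, k) = (n : C') * w := by
    have h := congrArg ι ((qdataB n hn).trX)
    simp only [Matrix.trace, Matrix.diag_apply, map_sum, map_zero] at h
    simp [Y, Finset.sum_add_distrib, h]
  let sub : Fin n × Fin n → SS n := fun p =>
    X p - (if p.1 = p.2 then C (1 / (n : ℂ)) * ∑ k, X (k, k) else 0)
  have hG := segre_kernel Y hY (aeval sub F) (by
    rw [← hF, ← AlgHom.comp_apply]
    congr 1
    apply algHom_ext
    intro p
    by_cases hp : p.1 = p.2 <;> simp [sub, hp, algebraMap_eq])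
  have e : aeval Y (aeval sub F) = ι (mkB n F) := by
    rw [← AlgHom.comp_apply, ← AlgHom.comp_apply]
    congr 1
    apply algHom_ext
    intro p
    have hx : ι (mkB n (X p)) = ι (xb n p.1 p.2) := rfl
    simp only [AlgHom.comp_apply, aeval_X, hx, sub, map_sub]
    by_cases hp : p.1 = p.2
    · simp only [hp, if_true, map_mul, map_sum, aeval_X, htr, aeval_C]
      simp only [Y, hp, if_true]
      have := alg_inv (B := C') (n : ℂ) (by simpa using nat_sub_ne n 0 (by omega))
      rw [map_natCast] at this
      linear_combination (-w) * this
    · simp [hp, Y]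
  rw [e, hι, Ideal.Quotient.eq_zero_iff_mem] at hG
  exact mkB_zero.1 (KK_inj n hn _ hG)

section
set_option linter.unusedSectionVars false
variable {B : Type*} [CommRing B] [Algebra ℂ B] {n : ℕ}

/-- The relations obtained from conjugates of `μ` (with parameters `0`, `1`). -/
def ConjRel (X : Matrix (Fin n) (Fin n) B) : Prop :=
  ∀ c d : ℂ, ∀ i j k l : Fin n, i ≠ j → i ≠ k → i ≠ l → j ≠ k → j ≠ l → k ≠ l →
    (X i j - algebraMap ℂ B c * X i i + algebraMap ℂ B c * (X j j - algebraMap ℂ B c * X j i)) *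
    (X k l - algebraMap ℂ B d * X k k + algebraMap ℂ B d * (X l l - algebraMap ℂ B d * X l k)) -
    (X k j - algebraMap ℂ B c * X k i + algebraMap ℂ B d * (X l j - algebraMap ℂ B c * X l i)) *
    (X i l - algebraMap ℂ B d * X i k + algebraMap ℂ B c * (X j l - algebraMap ℂ B d * X j k)) = 0

theorem ConjRel.N1 {X : Matrix (Fin n) (Fin n) B} (h : ConjRel X) (i j k l : Fin n) (h1 : i ≠ j)
    (h2 : i ≠ k) (h3 : i ≠ l) (h4 : j ≠ k) (h5 : j ≠ l) (h6 : k ≠ l) :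
    X i j * X k l = X i l * X k j := by
  have := h 0 0 i j k l h1 h2 h3 h4 h5 h6
  simp only [map_zero] at this
  linear_combination this

theorem ConjRel.N2 {X : Matrix (Fin n) (Fin n) B} (h : ConjRel X) (i j k l : Fin n) (h1 : i ≠ j)
    (h2 : i ≠ k) (h3 : i ≠ l) (h4 : j ≠ k) (h5 : j ≠ l) (h6 : k ≠ l) :
    X i j * X k k - X i k * X k j = X i j * X l l - X i l * X l j := by
  have := h 0 1 i j k l h1 h2 h3 h4 h5 h6
  have n1 := h.N1 i j k l h1 h2 h3 h4 h5 h6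
  have n2 := h.N1 i j l k h1 h3 h2 h5 h4 h6.symm
  simp only [map_zero, map_one] at this
  linear_combination -this + n1 - n2

theorem ConjRel.N3 {X : Matrix (Fin n) (Fin n) B} (h : ConjRel X) (i j k l : Fin n) (h1 : i ≠ j)
    (h2 : i ≠ k) (h3 : i ≠ l) (h4 : j ≠ k) (h5 : j ≠ l) (h6 : k ≠ l) :
    (X i i * X k k - X i k * X k i) - (X i i * X l l - X i l * X l i)
      - (X j j * X k k - X j k * X k j) + (X j j * X l l - X j l * X l j) = 0 := by
  have e := h 1 1 i j k l h1 h2 h3 h4 h5 h6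
  simp only [map_one] at e
  have a1 := h.N1 i j k l h1 h2 h3 h4 h5 h6
  have a2 := h.N1 i j l k h1 h3 h2 h5 h4 h6.symm
  have a3 := h.N1 j i k l h1.symm h4 h5 h2 h3 h6
  have a4 := h.N1 j i l k h1.symm h5 h4 h3 h2 h6.symm
  have b1 := h.N2 i j k l h1 h2 h3 h4 h5 h6
  have b2 := h.N2 j i k l h1.symm h4 h5 h2 h3 h6
  have b3 := h.N2 k l i j h6 h2.symm h4.symm h3.symm h5.symm h1
  have b4 := h.N2 l k i j h6.symm h3.symm h5.symm h2.symm h4.symm h1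
  linear_combination e - a1 + a2 + a3 - a4 + b1 - b2 + b3 - b4

theorem ConjRel.case1 (hn : 4 ≤ n) {X : Matrix (Fin n) (Fin n) B} (h : ConjRel X) (htr : X.trace = 0)
    (i j k : Fin n) (h1 : i ≠ j) (h2 : i ≠ k) (h3 : j ≠ k) :
    X i j * X k k - X i k * X k j + POf X i j = 0 := by
  set N := X i j * X k k - X i k * X k j with hN
  have e : ∀ l, X i l * X l j = X i j * X l l - (N - (if l = i then N else 0) - (if l = j then N else 0)) := by
    intro l
    by_cases hi : l = i
    · subst hi; simp [h1]; ring
    by_cases hj : l = j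
    · subst hj; simp [hi]
    by_cases hk : l = k
    · subst hk; simp [hi, hj, hN]
    · simp only [hi, hj, if_false, sub_zero]
      have := h.N2 i j k l h1 h2 (Ne.symm hi) h3 (Ne.symm hj) (Ne.symm hk)
      linear_combination -hN + this
  have s : (X * X) i j = - (((n : B) - 2) * N) := by
    rw [Matrix.mul_apply, Finset.sum_congr rfl fun l _ => e l, Finset.sum_sub_distrib,
      ← Finset.mul_sum]
    have : ∑ l, X l l = 0 := htr
    rw [this]
    simp [Finset.sum_sub_distrib]
    ring
  have p := congrFun (congrFun (POf_spec hn X) i) j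
  simp only [Matrix.smul_apply, Matrix.sub_apply, s, Matrix.one_apply_ne h1, smul_eq_mul] at p
  apply aux_cancel ((n : ℂ) - 2) (by simpa using nat_sub_ne n 2 (by omega))
  rw [map_sub, map_natCast, map_ofNat]
  linear_combination p

theorem comb {n : ℕ} (f : Fin n → Fin n → B) (hs : ∀ i k, f i k = f k i) (hd : ∀ i, f i i = 0)
    (h4 : ∀ i j k l : Fin n, i ≠ j → i ≠ k → i ≠ l → j ≠ k → j ≠ l → k ≠ l →
      f i k - f i l - f j k + f j l = 0) (i k : Fin n) (hik : i ≠ k) :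
    ((n : B) - 1) * ((n : B) - 2) * f i k =
      ((n : B) - 1) * (∑ l, f i l + ∑ l, f k l) - ∑ j, ∑ l, f j l := by
  have e : ∀ j l, f i k - f i l - f j k + f j l =
      (if j = l then f i k - f i j - f j k else 0) + (if l = i then f i k - f j k + f j i else 0)
      + (if j = k then f i k - f i l + f k l else 0)
      - (if j = k then (if l = i then 2 * f i k else 0) else 0) := by
    intro j l
    by_cases a1 : j = l
    · subst a1
      by_cases a2 : j = i
      · subst a2; simp [hd, hik]
      · by_cases a3 : j = k
        · subst a3; simp [a2, hd]
        · simp [a2, a3, hd]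
    · by_cases a2 : l = i
      · subst a2
        by_cases a3 : j = k
        · subst a3; simp [a1, hd, hs]; ring
        · simp [a1, a3, hd]
      · by_cases a3 : j = k
        · subst a3; simp [a1, a2, hd]
        · simp only [a1, a2, a3, if_false]
          by_cases a4 : l = k
          · subst a4; ring
          · by_cases a5 : j = i
            · subst a5; ring
            · rw [h4 i j k l (Ne.symm a5) hik (Ne.symm a2) a3 a1 (Ne.symm a4)]; ring
  have s := Finset.sum_congr rfl fun j (_ : j ∈ Finset.univ) =>
    Finset.sum_congr rfl fun l (_ : l ∈ (Finset.univ : Finset (Fin n))) => e j l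
  simp only [Finset.sum_add_distrib, Finset.sum_sub_distrib, Finset.sum_ite_eq, Finset.sum_ite_eq',
    Finset.mem_univ, if_true, Finset.sum_const, Finset.card_univ, Fintype.card_fin, nsmul_eq_mul,
    ← Finset.mul_sum] at s
  have s1 : ∑ x, (if x = k then ∑ y, (f i k - f i y + f k y) else 0) =
      n * f i k - ∑ l, f i l + ∑ l, f k l := by
    simp [Finset.sum_add_distrib, Finset.sum_sub_distrib]
  have s2 : ∀ x, (∑ y, if x = k then f i k - f i y + f k y else 0) =
    (if x = k then ∑ y, (f i k - f i y + f k y) else 0) := by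
    intro x; split_ifs <;> simp
  have s3 : ∀ x, (∑ y, if x = k then (if y = i then 2 * f i k else 0) else 0) =
    (if x = k then 2 * f i k else 0) := by
    intro x; split_ifs <;> simp
  have t1 : ∑ x, f x k = ∑ l, f k l := Finset.sum_congr rfl fun x _ => hs _ _
  have t2 : ∑ x, f x i = ∑ l, f i l := Finset.sum_congr rfl fun x _ => hs _ _
  simp only [s2, s3, s1, t1, t2, Finset.sum_ite_eq', Finset.mem_univ, if_true] at s
  linear_combination s

theorem ConjRel.case2 (hn : 4 ≤ n) {X : Matrix (Fin n) (Fin n) B} (h : ConjRel X) (htr : X.trace = 0)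
    (i k : Fin n) (h1 : i ≠ k) :
    X i i * X k k - X i k * X k i + POf X i i + POf X k k + qOf X = 0 := by
  have hF : ∀ i, ∑ l, (X i i * X l l - X i l * X l i) = - (X * X) i i := by
    intro i
    have : ∑ l, X l l = 0 := htr
    rw [Finset.sum_sub_distrib, ← Finset.mul_sum, this, Matrix.mul_apply]; ring
  have c := comb (fun i k => X i i * X k k - X i k * X k i) (by intros; ring) (by intros; ring)
    h.N3 i k h1
  simp only [hF] at c
  have hT : ∑ j, - (X * X) j j = - ((n : B) * ((n : B) - 1) * qOf X) := by
    rw [qOf_spec hn, Finset.sum_neg_distrib]; rfl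
  rw [hT] at c
  have p1 := congrFun (congrFun (POf_spec hn X) i) i
  have p2 := congrFun (congrFun (POf_spec hn X) k) k
  simp only [Matrix.smul_apply, Matrix.sub_apply, Matrix.one_apply_eq, smul_eq_mul] at p1 p2
  apply aux_cancel (((n : ℂ) - 1) * ((n : ℂ) - 2))
    (mul_ne_zero (by simpa using nat_sub_ne n 1 (by omega)) (by simpa using nat_sub_ne n 2 (by omega)))
  rw [map_mul, map_sub, map_sub, map_natCast, map_ofNat, map_one]
  linear_combination c + ((n : B) - 1) * (p1 + p2)

theorem ConjRel.e2 (hn : 4 ≤ n) {X : Matrix (Fin n) (Fin n) B} (h : ConjRel X) (htr : X.trace = 0)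
    (i k a b : Fin n) : E2 X (POf X) (qOf X) i k a b = 0 := by
  by_cases hik : i = k
  · subst hik; simp only [E2]; ring
  by_cases hab : a = b
  · subst hab; simp only [E2]; ring
  have hki : k ≠ i := Ne.symm hik
  have hba : b ≠ a := Ne.symm hab
  by_cases hia : i = a
  · subst hia
    by_cases hkb : k = b
    · subst hkb
      have := h.case2 hn htr i k hik
      simp only [E2, Matrix.one_apply_eq, Matrix.one_apply_ne hik, Matrix.one_apply_ne hki]
      linear_combination this
    · have := h.case1 hn htr k b i hkb hki hba
      simp only [E2, Matrix.one_apply_eq, Matrix.one_apply_ne hkb, Matrix.one_apply_ne hki,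
        Matrix.one_apply_ne hab]
      linear_combination this
  by_cases hka : k = a
  · subst hka
    by_cases hib : i = b
    · subst hib
      have := h.case2 hn htr i k hik
      simp only [E2, Matrix.one_apply_eq, Matrix.one_apply_ne hik, Matrix.one_apply_ne hki]
      linear_combination -this
    · have := h.case1 hn htr i b k hib hik hba
      simp only [E2, Matrix.one_apply_eq, Matrix.one_apply_ne hib, Matrix.one_apply_ne hik,
        Matrix.one_apply_ne hab]
      linear_combination -this
  by_cases hib : i = b
  · subst hib
    have := h.case1 hn htr k a i hka hki (Ne.symm hia)
    simp only [E2, Matrix.one_apply_eq, Matrix.one_apply_ne hia, Matrix.one_apply_ne hka,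
        Matrix.one_apply_ne hki]
    linear_combination -this
  by_cases hkb : k = b
  · subst hkb
    have := h.case1 hn htr i a k hia hik (Ne.symm hka)
    simp only [E2, Matrix.one_apply_eq, Matrix.one_apply_ne hia, Matrix.one_apply_ne hka,
        Matrix.one_apply_ne hik]
    linear_combination this
  have := h.N1 i a k b hia hik hib (Ne.symm hka) hab hkb
  simp only [E2, Matrix.one_apply_ne hia, Matrix.one_apply_ne hka, Matrix.one_apply_ne hib,
        Matrix.one_apply_ne hkb]
  linear_combination this

end

/-- coordinate functions -/
def xA (n : ℕ) (i j : Fin n) : polyFns n :=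
  ⟨fun X => X.1 i j, Algebra.subset_adjoin ⟨i, j, rfl⟩⟩

def piA (n : ℕ) : SS n →ₐ[ℂ] polyFns n := MvPolynomial.aeval fun p => xA n p.1 p.2

theorem piA_surj (n : ℕ) : Function.Surjective (piA n) := by
  rintro ⟨p, hp⟩
  suffices ∃ F, (piA n F : ↥(slS n) → ℂ) = p by
    obtain ⟨F, hF⟩ := this
    exact ⟨F, Subtype.ext hF⟩
  refine Algebra.adjoin_induction (p := fun p _ => ∃ F, (piA n F : ↥(slS n) → ℂ) = p)
    ?_ ?_ ?_ ?_ hp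
  · rintro p ⟨i, j, rfl⟩
    exact ⟨MvPolynomial.X (i, j), by simp [piA, xA]⟩
  · intro c
    exact ⟨algebraMap _ _ c, by rw [AlgHom.commutes]; rfl⟩
  · rintro x y _ _ ⟨F, rfl⟩ ⟨G, rfl⟩
    exact ⟨F + G, by simp⟩
  · rintro x y _ _ ⟨F, rfl⟩ ⟨G, rfl⟩
    exact ⟨F * G, by simp⟩

theorem piA_eval (n : ℕ) (F : SS n) (X : ↥(slS n)) :
    (piA n F : ↥(slS n) → ℂ) X = MvPolynomial.eval (fun p => X.1 p.1 p.2) F := by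
  have : ((Pi.evalAlgHom ℂ (fun _ : ↥(slS n) => ℂ) X).comp ((polyFns n).val.comp (piA n))) =
      MvPolynomial.aeval (fun p : Fin n × Fin n => X.1 p.1 p.2) := by
    apply MvPolynomial.algHom_ext
    intro p
    simp [piA, xA]
  have h := AlgHom.congr_fun this F
  rw [MvPolynomial.aeval_eq_eval] at h
  exact h

/-- pullback to the Segre parametrization -/
def hat (n : ℕ) : SS n →ₐ[ℂ] MvPolynomial (Fin n ⊕ Fin n) ℂ :=
  MvPolynomial.aeval (fun p : Fin n × Fin n =>
    (MvPolynomial.X (Sum.inl p.1) * MvPolynomial.X (Sum.inr p.2) -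
      (if p.1 = p.2 then MvPolynomial.C (1 / (n : ℂ)) *
        ∑ k, MvPolynomial.X (Sum.inl k) * MvPolynomial.X (Sum.inr k) else 0) :
      MvPolynomial (Fin n ⊕ Fin n) ℂ))

theorem hat_eval (n : ℕ) (F : SS n) (w : Fin n ⊕ Fin n → ℂ) :
    MvPolynomial.eval w (hat n F) = MvPolynomial.eval (fun p => w (Sum.inl p.1) * w (Sum.inr p.2) -
      (if p.1 = p.2 then (1 / (n : ℂ)) * ∑ k, w (Sum.inl k) * w (Sum.inr k) else 0)) F := by
  have : ((MvPolynomial.aeval w).comp (hat n)) =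
      MvPolynomial.aeval (fun p : Fin n × Fin n => w (Sum.inl p.1) * w (Sum.inr p.2) -
      (if p.1 = p.2 then (1 / (n : ℂ)) * ∑ k, w (Sum.inl k) * w (Sum.inr k) else 0)) := by
    apply MvPolynomial.algHom_ext
    intro p
    by_cases hp : p.1 = p.2 <;> simp [hat, hp]
  have h := AlgHom.congr_fun this F
  rw [MvPolynomial.aeval_eq_eval, AlgHom.comp_apply, MvPolynomial.aeval_eq_eval] at h
  exact h

/-- the diagonal matrix -/
def DD (n : ℕ) : Mat n :=
  Matrix.diagonal fun i : Fin n => if (i : ℕ) = 0 then ((n : ℂ) - 1) else -1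

theorem conj_D (n : ℕ) (h0 : 0 < n) (g g' : Mat n) (hg : g * g' = 1) (t : ℂ) (i j : Fin n) :
    (t • (g * DD n * g')) i j = (n * t * g i ⟨0, h0⟩) * g' ⟨0, h0⟩ j - if i = j then t else 0 := by
  have e : DD n = Matrix.diagonal (fun i => if i = ⟨0, h0⟩ then (n : ℂ) else 0) - 1 := by
    ext a b
    by_cases hab : a = b
    · subst hab
      by_cases ha : a = ⟨0, h0⟩
      · simp [DD, ha]
      · have ha' : (a : ℕ) ≠ 0 := fun h => ha (Fin.ext h)
        simp [DD, ha, ha']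
    · simp [DD, hab]
  rw [e, Matrix.mul_sub, Matrix.sub_mul, Matrix.mul_one, hg, Matrix.smul_apply, Matrix.sub_apply,
    Matrix.mul_apply]
  simp only [Matrix.mul_diagonal, Matrix.one_apply, smul_eq_mul]
  simp only [mul_ite, ite_mul, mul_zero, zero_mul, Finset.sum_ite_eq', Finset.mem_univ, if_true,
    mul_sub, mul_one]
  ring

def coneS (n : ℕ) : Set ↥(slS n) := {X : ↥(slS n) | ∃ t : ℂ, t ≠ 0 ∧ ∃ g : GLn n,
        X.1 = t • ((↑g : Mat n) * DD n * (↑g⁻¹ : Mat n))}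

theorem cone_of_hat (n : ℕ) (hn : 4 ≤ n) (F : SS n) (hF : hat n F = 0) (X : ↥(slS n))
    (hX : X ∈ coneS n) : (piA n F : ↥(slS n) → ℂ) X = 0 := by
  obtain ⟨t, ht, g, hg⟩ := hX
  have h0 : 0 < n := by omega
  have hgg : (↑g : Mat n) * (↑g⁻¹ : Mat n) = 1 := by rw [← Units.val_mul, mul_inv_cancel]; rfl
  have hgg' : (↑g⁻¹ : Mat n) * (↑g : Mat n) = 1 := by rw [← Units.val_mul, inv_mul_cancel]; rfl
  have he := hat_eval n F (Sum.elim (fun i => n * t * (↑g : Mat n) i ⟨0, h0⟩)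
    (fun j => (↑g⁻¹ : Mat n) ⟨0, h0⟩ j))
  rw [hF, map_zero] at he
  rw [piA_eval, he]
  congr 2
  funext p
  rw [hg, conj_D n h0 _ _ hgg]
  simp only [Sum.elim_inl, Sum.elim_inr]
  congr 1
  have hs : ∑ k, n * t * (↑g : Mat n) k ⟨0, h0⟩ * (↑g⁻¹ : Mat n) ⟨0, h0⟩ k = n * t := by
    have := congrFun (congrFun hgg' ⟨0, h0⟩) ⟨0, h0⟩
    rw [Matrix.mul_apply, Matrix.one_apply_eq] at this
    calc _ = n * t * ∑ j, (↑g⁻¹ : Mat n) ⟨0, h0⟩ j * (↑g : Mat n) j ⟨0, h0⟩ := by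
          rw [Finset.mul_sum]
          exact Finset.sum_congr rfl fun k _ => by ring
      _ = n * t := by rw [this, mul_one]
  rw [hs]
  have : (n : ℂ) ≠ 0 := by norm_cast; omega
  split_ifs
  · field_simp
  · rfl

theorem hat_of_cone (n : ℕ) (hn : 4 ≤ n) (F : SS n)
    (h : ∀ X ∈ coneS n, (piA n F : ↥(slS n) → ℂ) X = 0) : hat n F = 0 := by
  have h0 : 0 < n := by omega
  have hnn : (n : ℂ) ≠ 0 := by norm_cast; omega
  let z : Fin n := ⟨0, h0⟩
  let T : MvPolynomial (Fin n ⊕ Fin n) ℂ :=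
    ∑ k, MvPolynomial.X (Sum.inl k) * MvPolynomial.X (Sum.inr k)
  have hT : T ≠ 0 := by
    intro hT
    have := congrArg (MvPolynomial.eval (fun _ => (1 : ℂ))) hT
    simp [T] at this
    omega
  have key : hat n F * (MvPolynomial.X (Sum.inr z) * T) = 0 := by
    apply MvPolynomial.funext
    intro w
    rw [map_zero, map_mul, map_mul, MvPolynomial.eval_X]
    by_cases hz : w (Sum.inr z) = 0
    · rw [hz]; ring
    have hTe : MvPolynomial.eval w T = ∑ k, w (Sum.inl k) * w (Sum.inr k) := by simp [T]
    rw [hTe]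
    set c := ∑ k, w (Sum.inl k) * w (Sum.inr k) with hc
    by_cases hc0 : c = 0
    · rw [hc0]; ring
    suffices MvPolynomial.eval w (hat n F) = 0 by rw [this, zero_mul]
    let g : Mat n := Matrix.of fun i k => if k = z then w (Sum.inl i) else
      (if i = k then 1 else 0) - (if i = z then w (Sum.inr k) / w (Sum.inr z) else 0)
    let g' : Mat n := Matrix.of fun k j => if k = z then w (Sum.inr j) / c else
      (if k = j then 1 else 0) - w (Sum.inl k) * (w (Sum.inr j) / c)
    have hv : ∀ m, ∑ j, w (Sum.inr j) / c * g j m = if m = z then 1 else 0 := by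
      intro m
      by_cases hm : m = z
      · subst hm
        simp only [g, Matrix.of_apply, if_true]
        have : ∀ x, w (Sum.inr x) / c * w (Sum.inl x) = (w (Sum.inl x) * w (Sum.inr x)) / c := by
          intro x; ring
        simp only [this]
        rw [← Finset.sum_div, ← hc, div_self hc0]
      · simp only [g, Matrix.of_apply, hm, if_false, mul_sub, mul_ite, mul_one, mul_zero,
          Finset.sum_sub_distrib, Finset.sum_ite_eq', Finset.mem_univ, if_true]
        field_simp
        ring
    have hgg' : g' * g = 1 := by
      ext k m
      rw [Matrix.mul_apply]
      by_cases hk : k = z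
      · subst hk
        have : ∀ j, g' z j = w (Sum.inr j) / c := by intro j; simp [g']
        simp only [this, hv, Matrix.one_apply, eq_comm]
      · have : ∀ j, g' k j = (if k = j then 1 else 0) - w (Sum.inl k) * (w (Sum.inr j) / c) := by
          intro j; simp [g', hk]
        simp only [this, sub_mul, Finset.sum_sub_distrib, mul_assoc, ← Finset.mul_sum, hv]
        simp only [ite_mul, one_mul, zero_mul, Finset.sum_ite_eq, Finset.mem_univ, if_true]
        by_cases hm : m = z
        · subst hm; simp [g, hk]
        · simp [g, hk, hm, Matrix.one_apply]
    have hgg : g * g' = 1 := mul_eq_one_comm.mp hgg'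
    let G : GLn n := ⟨g, g', hgg, hgg'⟩
    let M : Mat n := (c / n) • (g * DD n * g')
    have hM : ∀ i j, M i j = w (Sum.inl i) * w (Sum.inr j) - if i = j then 1 / (n : ℂ) * c else 0 := by
      intro i j
      simp only [M]
      rw [conj_D n h0 _ _ hgg]
      have e1 : g i ⟨0, h0⟩ = w (Sum.inl i) := by simp [g, z]
      have e2 : g' ⟨0, h0⟩ j = w (Sum.inr j) / c := by simp [g', z]
      rw [e1, e2]
      congr 1
      · field_simp
      · congr 1; ring
    have hMtr : M ∈ slS n := by
      change M.trace = 0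
      simp only [Matrix.trace, Matrix.diag_apply, hM, if_true, Finset.sum_sub_distrib, ← hc]
      simp
      field_simp
      ring
    have := h ⟨M, hMtr⟩ ⟨c / n, div_ne_zero hc0 hnn, G, rfl⟩
    rw [piA_eval] at this
    rw [hat_eval]
    refine Eq.trans ?_ this
    congr 2
    funext p
    exact (hM _ _).symm
  rcases mul_eq_zero.mp key with h | h
  · exact h
  · rcases mul_eq_zero.mp h with h | h
    · exact absurd h (MvPolynomial.X_ne_zero _)
    · exact absurd h hT

theorem ltA (n : ℕ) (hn : 4 ≤ n) : n - 1 < n := by omega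

theorem ltB (n : ℕ) (hn : 4 ≤ n) : n - 2 < n := by omega

theorem ltC (n : ℕ) (hn : 4 ≤ n) : 0 < n := by omega

theorem ltD (n : ℕ) (hn : 4 ≤ n) : 1 < n := by omega

def muN (n : ℕ) (hn : 4 ≤ n) (X : Mat n) : ℂ :=
      X ⟨n - 1, ltA n hn⟩ ⟨0, ltC n hn⟩ * X ⟨n - 2, ltB n hn⟩ ⟨1, ltD n hn⟩ -
      X ⟨n - 2, ltB n hn⟩ ⟨0, ltC n hn⟩ * X ⟨n - 1, ltA n hn⟩ ⟨1, ltD n hn⟩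

def IA (n : ℕ) (hn : 4 ≤ n) : Ideal (polyFns n) :=
  Ideal.span {p : polyFns n | ∃ g : GLn n,
      (p : ↥(slS n) → ℂ) = fun X => muN n hn ((↑g : Mat n) * X.1 * (↑g⁻¹ : Mat n))}

theorem exists_perm4 (n : ℕ) (hn : 4 ≤ n) (i j k l : Fin n) (h1 : i ≠ j)
    (h2 : i ≠ k) (h3 : i ≠ l) (h4 : j ≠ k) (h5 : j ≠ l) (h6 : k ≠ l) :
    ∃ τ : Equiv.Perm (Fin n), τ ⟨n - 1, ltA n hn⟩ = i ∧ τ ⟨0, ltC n hn⟩ = j ∧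
      τ ⟨n - 2, ltB n hn⟩ = k ∧ τ ⟨1, ltD n hn⟩ = l := by
  have hp := Equiv.Perm.isMultiplyPretransitive (Fin n) 4
  let x : Fin 4 ↪ Fin n := ⟨![⟨n - 1, ltA n hn⟩, ⟨0, ltC n hn⟩, ⟨n - 2, ltB n hn⟩, ⟨1, ltD n hn⟩], by
    intro a b hab
    fin_cases a <;> fin_cases b <;> simp [Fin.ext_iff] at hab ⊢ <;> omega⟩
  let y : Fin 4 ↪ Fin n := ⟨![i, j, k, l], by
    intro a b hab
    fin_cases a <;> fin_cases b <;> simp_all⟩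
  obtain ⟨τ, hτ⟩ := hp.exists_smul_eq x y
  refine ⟨τ, ?_, ?_, ?_, ?_⟩
  · exact DFunLike.congr_fun hτ 0
  · exact DFunLike.congr_fun hτ 1
  · exact DFunLike.congr_fun hτ 2
  · exact DFunLike.congr_fun hτ 3

theorem relA (n : ℕ) (hn : 4 ≤ n) :
    ConjRel (Matrix.of fun i j => Ideal.Quotient.mkₐ ℂ (IA n hn) (xA n i j)) := by
  intro c d i j k l h1 h2 h3 h4 h5 h6
  obtain ⟨τ, t1, t2, t3, t4⟩ := exists_perm4 n hn i j k l h1 h2 h3 h4 h5 h6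
  let N : Mat n := Matrix.single i j c + Matrix.single k l d
  have hN : N * N = 0 := by
    simp [N, Matrix.add_mul, Matrix.mul_add, h1.symm, h3.symm, h4, h6.symm]
  let h : Mat n := 1 + N
  let h' : Mat n := 1 - N
  have hh : h * h' = 1 := by
    simp only [h, h', Matrix.add_mul, Matrix.mul_sub, hN, Matrix.mul_one, Matrix.one_mul]; abel
  have hh' : h' * h = 1 := mul_eq_one_comm.mp hh
  let g : GLn n := ⟨h.submatrix τ id, h'.submatrix id τ, by
    exact (Matrix.submatrix_mul_equiv h h' τ (Equiv.refl _) τ).trans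
      (by rw [hh, Matrix.submatrix_one_equiv]), by
    rw [Matrix.submatrix_mul_equiv h' h id τ id, hh', Matrix.submatrix_id_id]⟩
  have hc : ∀ X : Mat n, (↑g : Mat n) * X * (↑g⁻¹ : Mat n) = (h * X * h').submatrix τ τ := by
    intro X
    rfl
  have hrow : ∀ Z : Mat n, ∀ b, (h * Z) i b = Z i b + c * Z j b ∧ (h * Z) k b = Z k b + d * Z l b := by
    intro Z b
    simp only [h, N, Matrix.add_mul, Matrix.one_mul, Matrix.add_apply]
    simp [h2, h2.symm]
  have hcol : ∀ Z : Mat n, ∀ a, (Z * h') a j = Z a j - c * Z a i ∧ (Z * h') a l = Z a l - d * Z a k := by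
    intro Z b
    simp only [h', N, Matrix.mul_sub, Matrix.mul_add, Matrix.mul_one, Matrix.add_apply, Matrix.sub_apply]
    simp [h5, h5.symm, mul_comm]
  let A := algebraMap ℂ (polyFns n)
  let x := xA n
  let p0 : polyFns n :=
    (x i j - A c * x i i + A c * (x j j - A c * x j i)) *
    (x k l - A d * x k k + A d * (x l l - A d * x l k)) -
    (x k j - A c * x k i + A d * (x l j - A c * x l i)) *
    (x i l - A d * x i k + A c * (x j l - A d * x j k))
  have hp0 : p0 ∈ IA n hn := by
    apply Ideal.subset_span
    refine ⟨g, ?_⟩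
    funext X
    rw [hc]
    simp only [muN, Matrix.submatrix_apply, t1, t2, t3, t4, Matrix.mul_assoc]
    rw [(hrow _ _).1, (hrow _ _).1, (hrow _ _).2, (hrow _ _).2]
    simp only [(hcol _ _).1, (hcol _ _).2]
    have e : ∀ c : ℂ, ((A c : polyFns n) : ↥(slS n) → ℂ) X = c := fun c => rfl
    have e' : ∀ i j, ((x i j : polyFns n) : ↥(slS n) → ℂ) X = X.1 i j := fun i j => rfl
    simp only [p0, Subalgebra.coe_sub, Subalgebra.coe_mul, Subalgebra.coe_add, Pi.sub_apply,
      Pi.mul_apply, Pi.add_apply, e, e']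
  have : Ideal.Quotient.mkₐ ℂ (IA n hn) p0 = 0 := Ideal.Quotient.eq_zero_iff_mem.2 hp0
  simp only [p0, map_sub, map_mul, map_add, A, AlgHom.commutes] at this
  simpa only [Matrix.of_apply] using this

theorem II_le_ker {C : Type*} [CommRing C] [Algebra ℂ C] (n : ℕ) (hn : 4 ≤ n) (f : SS n →ₐ[ℂ] C)
    (h : ConjRel ((xs n).map f)) (htr : ((xs n).map f).trace = 0) (F : SS n) (hF : F ∈ II n) :
    f F = 0 := by
  have : II n ≤ RingHom.ker f := by
    rw [II, Ideal.span_le]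
    rintro z (rfl | ⟨i, k, a, b, rfl⟩)
    · change f _ = 0
      rw [← htr]; simp [Matrix.trace]
    · change f _ = 0
      rw [E2_map]
      exact ConjRel.e2 hn h htr i k a b
  exact this hF

theorem II_le_gen {A : Type*} [CommRing A] [Algebra ℂ A] (J : Ideal A) (n : ℕ) (hn : 4 ≤ n)
    (x : Fin n → Fin n → A)
    (hrel : ConjRel (Matrix.of fun i j => Ideal.Quotient.mkₐ ℂ J (x i j)))
    (htr : ∑ i, x i i = 0) (φ : SS n →ₐ[ℂ] A) (hφ : ∀ i j, φ (MvPolynomial.X (i, j)) = x i j)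
    (F : SS n) (hF : F ∈ II n) : φ F ∈ J := by
  let f : SS n →ₐ[ℂ] (A ⧸ J) := (Ideal.Quotient.mkₐ ℂ J).comp φ
  have hx : (xs n).map f = Matrix.of fun i j => Ideal.Quotient.mkₐ ℂ J (x i j) := by
    ext i j
    simp [f, xs, hφ]
  have htr' : ((xs n).map f).trace = 0 := by
    rw [hx]
    simp only [Matrix.trace, Matrix.diag_apply, Matrix.of_apply]
    rw [← map_sum, htr, map_zero]
  rw [← hx] at hrel
  exact Ideal.Quotient.eq_zero_iff_mem.1 (II_le_ker n hn f hrel htr' F hF)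

theorem xA_tr (n : ℕ) : ∑ i, xA n i i = 0 := by
  apply Subtype.ext
  funext X
  have h2 : ((∑ i, xA n i i : polyFns n) : ↥(slS n) → ℂ) =
      ∑ i, (xA n i i : ↥(slS n) → ℂ) := map_sum (polyFns n).val _ _
  rw [h2, Finset.sum_apply]
  exact X.2

theorem II_le (n : ℕ) (hn : 4 ≤ n) (F : SS n) (hF : F ∈ II n) : piA n F ∈ IA n hn := by
  have hφ : ∀ i j, piA n (MvPolynomial.X (i, j)) = xA n i j := by
    intro i j
    simp [piA]
  exact II_le_gen (IA n hn) n hn (xA n) (relA n hn) (xA_tr n) (piA n) hφ F hF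

theorem IA_cone (n : ℕ) (hn : 4 ≤ n) (p : polyFns n) (hp : p ∈ IA n hn) (X : ↥(slS n))
    (hX : X ∈ coneS n) : (p : ↥(slS n) → ℂ) X = 0 := by
  obtain ⟨t, ht, g, hg⟩ := hX
  have h0 : 0 < n := by omega
  refine Submodule.span_induction (p := fun (p : polyFns n) _ => (p : ↥(slS n) → ℂ) X = 0) ?_ ?_ ?_ ?_ hp
  · rintro p ⟨k, hk⟩
    rw [hk]
    simp only
    have e : (↑k : Mat n) * X.1 * (↑k⁻¹ : Mat n) =
        t • ((↑k * ↑g : Mat n) * DD n * (↑g⁻¹ * ↑k⁻¹ : Mat n)) := by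
      rw [hg]; simp [Matrix.mul_assoc]
    have hkg : (↑k * ↑g : Mat n) * (↑g⁻¹ * ↑k⁻¹ : Mat n) = 1 := by
      have : (k * g) * (g⁻¹ * k⁻¹) = 1 := by group
      exact congrArg Units.val this
    rw [e]
    simp only [muN, conj_D n h0 _ _ hkg, Fin.mk.injEq]
    rw [if_neg (by omega), if_neg (by omega), if_neg (by omega), if_neg (by omega)]
    ring
  · rfl
  · intro x y _ _ hx hy
    simp [hx, hy]
  · intro c x _ hx
    simp [hx]

theorem mem_IA (n : ℕ) (hn : 4 ≤ n) (F : SS n) : piA n F ∈ IA n hn ↔ hat n F = 0 :=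
  ⟨fun h => hat_of_cone n hn F fun X hX => IA_cone n hn _ h X hX,
    fun h => II_le n hn F (main_alg n hn F h)⟩

theorem stmt_7 (n : ℕ) (hn : 4 ≤ n)
    -- `μ(X) = X_{n,1}·X_{n−1,2} − X_{n−1,1}·X_{n,2}` (1-based indices)
    (mu : Mat n → ℂ)
    (hmu : mu = fun X =>
      X ⟨n - 1, by omega⟩ ⟨0, by omega⟩ * X ⟨n - 2, by omega⟩ ⟨1, by omega⟩ -
      X ⟨n - 2, by omega⟩ ⟨0, by omega⟩ * X ⟨n - 1, by omega⟩ ⟨1, by omega⟩)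
    -- `I` is the ideal of `ℂ[sl_n]` generated by the functions `X ↦ μ(g·X·g⁻¹)`
    (I : Ideal (polyFns n))
    (hI : I = Ideal.span {p : polyFns n | ∃ g : GLn n,
      (p : ↥(slS n) → ℂ) = fun X => mu ((↑g : Mat n) * X.1 * (↑g⁻¹ : Mat n))})
    -- `D = diag(n−1, −1, −1, …, −1)`
    (D : Mat n)
    (hD : D = Matrix.diagonal fun i : Fin n => if (i : ℕ) = 0 then ((n : ℂ) - 1) else -1) :
    I.IsPrime ∧
    ∀ p : polyFns n, p ∈ I ↔
      ∀ X ∈ slZclosure n {X : ↥(slS n) | ∃ t : ℂ, t ≠ 0 ∧ ∃ g : GLn n,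
        X.1 = t • ((↑g : Mat n) * D * (↑g⁻¹ : Mat n))},
        (p : ↥(slS n) → ℂ) X = 0 := by
  have hD' : D = DD n := hD
  have hmu' : mu = muN n hn := hmu
  have hI' : I = IA n hn := by rw [hI, hmu']; rfl
  subst hD'
  rw [hI']
  clear hI hI' hmu hmu' hD
  refine ⟨?_, ?_⟩
  · refine ⟨?_, ?_⟩
    · rw [Ideal.ne_top_iff_one]
      intro h
      rw [← map_one (piA n), mem_IA, map_one] at h
      exact one_ne_zero h
    · intro p q hpq
      obtain ⟨F, rfl⟩ := piA_surj n p
      obtain ⟨G, rfl⟩ := piA_surj n q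
      rw [← map_mul, mem_IA, map_mul] at hpq
      rw [mem_IA, mem_IA]
      exact mul_eq_zero.mp hpq
  · intro p
    constructor
    · intro hp X hX
      refine hX {X | (p : ↥(slS n) → ℂ) X = 0} ⟨⟨{(p : ↥(slS n) → ℂ)}, ?_, ?_⟩, ?_⟩
      · rintro _ rfl; exact p.2
      · ext X; simp
      · intro X hX
        exact IA_cone n hn p hp X hX
    · intro h
      obtain ⟨F, rfl⟩ := piA_surj n p
      rw [mem_IA]
      refine hat_of_cone n hn F fun X hX => h X ?_
      rintro E ⟨-, hE⟩
      exact hE hX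
end
end

section
/- Let m ≥ 2 and let D ∈ sl_{2m}(ℂ) be the diagonal matrix with m entries equal to 1 followed by m entries equal to −1. Then the following four subsets of sl_{2m}(ℂ) coincide: (1) {X : the (2m,1) entry of g·X²·g⁻¹ vanishes for all g ∈ GL_{2m}(ℂ)}; (2) {X : X² is a scalar multiple of the identity matrix}; (3) the Zariski closure of the cone {t·g·D·g⁻¹ : t ∈ ℂ∖{0}, g ∈ GL_{2m}(ℂ)}; (4) {t·g·D·g⁻¹ : t ∈ ℂ∖{0}, g ∈ GL_{2m}(ℂ)} ∪ {X : X² = 0}. -/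
open Matrix

noncomputable section

theorem exists_intermediate {V : Type*} [AddCommGroup V] [Module ℂ V] [FiniteDimensional ℂ V]
    (A B : Submodule ℂ V) (hAB : A ≤ B) (k : ℕ)
    (hk : Module.finrank ℂ A + k ≤ Module.finrank ℂ B) :
    ∃ C : Submodule ℂ V, A ≤ C ∧ C ≤ B ∧ Module.finrank ℂ C = Module.finrank ℂ A + k := by
  induction k with
  | zero => exact ⟨A, le_rfl, hAB, rfl⟩
  | succ k ih =>
    obtain ⟨C, h1, h2, h3⟩ := ih (by omega)
    have hne : ¬ B ≤ C := by
      intro h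
      have := Submodule.finrank_mono h
      omega
    obtain ⟨x, hxB, hxC⟩ := SetLike.not_le_iff_exists.1 hne
    refine ⟨C ⊔ Submodule.span ℂ {x}, h1.trans le_sup_left, sup_le h2 (by simpa using hxB), ?_⟩
    rw [Submodule.finrank_sup_span_singleton hxC, h3, add_assoc]

theorem involution_conj (m : ℕ) (P : Mat (2 * m)) (hP : P * P = 1) (ht : P.trace = 0) :
    ∃ g : GLn (2 * m), P = (↑g : Mat (2 * m)) *
      (Matrix.diagonal fun i : Fin (2 * m) => if (i : ℕ) < m then (1 : ℂ) else -1) *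
        (↑g⁻¹ : Mat (2 * m)) := by
  set f : (Fin (2 * m) → ℂ) →ₗ[ℂ] (Fin (2 * m) → ℂ) := Matrix.toLin' P with hf
  have hff : ∀ v, f (f v) = v := by
    intro v
    simp [hf, Matrix.mulVec_mulVec, hP]
  set q : (Fin (2 * m) → ℂ) →ₗ[ℂ] (Fin (2 * m) → ℂ) := (2⁻¹ : ℂ) • (LinearMap.id + f) with hq
  have hqv : ∀ v, q v = (2⁻¹ : ℂ) • (v + f v) := fun v => by simp [hq]
  have hid : IsIdempotentElem q := by
    ext1 v
    ext1
    simp only [LinearMap.comp_apply, Module.End.mul_apply, hqv, map_smul, map_add, hff]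
    ext i
    simp
    ring
  have hproj := LinearMap.IsIdempotentElem.isProj_range q hid
  have htr : LinearMap.trace ℂ _ q = (m : ℂ) := by
    rw [hq, map_smul, map_add, LinearMap.trace_id, hf, Matrix.trace_toLin'_eq, ht]
    simp
  have h1 : Module.finrank ℂ (LinearMap.range q) = m := by
    have := hproj.trace
    rw [htr] at this
    exact_mod_cast this.symm
  have hc := hproj.isCompl
  have h2 : Module.finrank ℂ (LinearMap.ker q) = m := by
    have := Submodule.finrank_add_eq_of_isCompl hc
    simp at this
    omega
  have e1 : ∀ v ∈ LinearMap.range q, f v = v := by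
    rintro _ ⟨v, rfl⟩
    rw [hqv, map_smul, map_add, hff, add_comm]
  have e2 : ∀ v ∈ LinearMap.ker q, f v = -v := by
    intro v hv
    rw [LinearMap.mem_ker, hqv] at hv
    have := (smul_eq_zero.1 hv).resolve_left (by norm_num)
    exact eq_neg_of_add_eq_zero_right this
  let b1 := Module.finBasisOfFinrankEq ℂ (LinearMap.range q) h1
  let b2 := Module.finBasisOfFinrankEq ℂ (LinearMap.ker q) h2
  let b0 := (b1.prod b2).map (Submodule.prodEquivOfIsCompl _ _ hc)
  let b : Module.Basis (Fin (2 * m)) ℂ (Fin (2 * m) → ℂ) :=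
    b0.reindex (finSumFinEquiv.trans (finCongr (by omega)))
  have hb : ∀ i, f (b i) = (if (i : ℕ) < m then (1 : ℂ) else -1) • b i := by
    intro i
    obtain ⟨j, rfl⟩ := (finSumFinEquiv.trans (finCongr (show m + m = 2 * m by omega))).surjective i
    have : b ((finSumFinEquiv.trans (finCongr (show m + m = 2 * m by omega))) j) = b0 j := by
      simp only [b, Module.Basis.reindex_apply, Equiv.symm_apply_apply]
    rw [this]
    rcases j with j | j
    · simp [b0, e1]
    · simp [b0, e2]
  let g : GLn (2 * m) :=
    ⟨(Pi.basisFun ℂ (Fin (2 * m))).toMatrix b, b.toMatrix (Pi.basisFun ℂ (Fin (2 * m))),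
      Module.Basis.toMatrix_mul_toMatrix_flip _ _, Module.Basis.toMatrix_mul_toMatrix_flip _ _⟩
  refine ⟨g, ?_⟩
  have hg : P * (↑g : Mat (2 * m)) = (↑g : Mat (2 * m)) *
      (Matrix.diagonal fun i : Fin (2 * m) => if (i : ℕ) < m then (1 : ℂ) else -1) := by
    ext i j
    have := congrFun (hb j) i
    rw [Matrix.mul_diagonal]
    have e : ∀ i j, (↑g : Mat (2 * m)) i j = b j i := fun i j => by
      simp [g, Module.Basis.toMatrix_apply]
    rw [Matrix.mul_apply]
    simp only [e]
    rw [hf, Matrix.toLin'_apply] at this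
    simp only [Matrix.mulVec, dotProduct] at this
    rw [this]
    simp [mul_comm]
  rw [← hg, mul_assoc, ← Units.val_mul, mul_inv_cancel]
  simp

theorem exists_anticomm (m : ℕ) (X : Mat (2 * m)) (hX : X * X = 0) :
    ∃ Y : Mat (2 * m), Y * Y = 1 ∧ Y.trace = 0 ∧ X * Y + Y * X = 0 := by
  set f : (Fin (2 * m) → ℂ) →ₗ[ℂ] (Fin (2 * m) → ℂ) := Matrix.toLin' X with hf
  have hff : ∀ v, f (f v) = 0 := by
    intro v
    simp [hf, Matrix.mulVec_mulVec, hX]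
  have hle : LinearMap.range f ≤ LinearMap.ker f := by
    rintro _ ⟨v, rfl⟩
    exact hff v
  have hrn := LinearMap.finrank_range_add_finrank_ker f
  rw [Module.finrank_fin_fun] at hrn
  have hle' := Submodule.finrank_mono hle
  obtain ⟨A, hA1, hA2, hA3⟩ := exists_intermediate _ _ hle
    (m - Module.finrank ℂ (LinearMap.range f)) (by omega)
  obtain ⟨B, hB⟩ := A.exists_isCompl
  obtain ⟨p, hp⟩ : ∃ p : (Fin (2 * m) → ℂ) →ₗ[ℂ] (Fin (2 * m) → ℂ), LinearMap.IsProj A p :=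
    ⟨A.projection B hB, ⟨fun x => Submodule.projection_apply_mem hB x,
      fun x hx => Submodule.projection_apply_of_mem_left hB hx⟩⟩
  have htr := hp.trace
  have hpp : ∀ v, p (p v) = p v := fun v => hp.map_id _ (hp.map_mem v)
  have hpf : ∀ v, p (f v) = f v := fun v => hp.map_id _ (hA1 ⟨v, rfl⟩)
  have hfp : ∀ v, f (p v) = 0 := fun v => hA2 (hp.map_mem v)
  set y : (Fin (2 * m) → ℂ) →ₗ[ℂ] (Fin (2 * m) → ℂ) := (2 : ℂ) • p - LinearMap.id with hy
  have hXf : X = LinearMap.toMatrix' f := by simp [hf]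
  refine ⟨LinearMap.toMatrix' y, ?_, ?_, ?_⟩
  · rw [← LinearMap.toMatrix'_comp, ← LinearMap.toMatrix'_id]
    congr 1
    ext1 v
    ext1
    simp only [hy, LinearMap.comp_apply, LinearMap.sub_apply, LinearMap.smul_apply,
      LinearMap.id_apply, map_sub, map_smul, hpp]
    module
  · have : (LinearMap.toMatrix' y).trace = LinearMap.trace ℂ _ y := by
      rw [← Matrix.trace_toLin'_eq, Matrix.toLin'_toMatrix']
    rw [this, hy, map_sub, map_smul, LinearMap.trace_id, htr, hA3, Module.finrank_fin_fun,
      Nat.add_sub_cancel' (by omega)]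
    simp
  · rw [hXf, ← LinearMap.toMatrix'_comp, ← LinearMap.toMatrix'_comp, ← map_add]
    refine (LinearEquiv.map_eq_zero_iff _).2 ?_
    ext1 v
    ext1
    simp only [hy, LinearMap.comp_apply, LinearMap.sub_apply, LinearMap.smul_apply,
      LinearMap.add_apply,
      LinearMap.id_apply, map_sub, map_smul, hpf, hfp, LinearMap.zero_apply]
    module

theorem offdiag_zero (n : ℕ) (a b : Fin n) (hab : a ≠ b) (Y : Mat n)
    (h : ∀ g : GLn n, ((↑g : Mat n) * Y * (↑g⁻¹ : Mat n)) a b = 0) (i j : Fin n) (hij : i ≠ j) :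
    Y i j = 0 := by
  obtain ⟨σ, hσa, hσb⟩ : ∃ σ : Equiv.Perm (Fin n), σ a = i ∧ σ b = j := by
    let τ := Equiv.swap a i
    refine ⟨τ.trans (Equiv.swap (τ b) j), ?_, ?_⟩
    · have h1 : τ a = i := Equiv.swap_apply_left _ _
      have h2 : i ≠ τ b := by
        rw [← h1]
        exact fun h => hab (τ.injective h)
      rw [Equiv.trans_apply, h1, Equiv.swap_apply_of_ne_of_ne h2 hij]
    · simp
  let g : GLn n := ⟨σ.toPEquiv.toMatrix, σ.symm.toPEquiv.toMatrix, by
      rw [← PEquiv.toMatrix_trans, ← Equiv.toPEquiv_trans]; simp, by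
      rw [← PEquiv.toMatrix_trans, ← Equiv.toPEquiv_trans]; simp⟩
  have := h g
  change ((σ.toPEquiv.toMatrix : Mat n) * Y * (σ.symm.toPEquiv.toMatrix : Mat n) : Mat n) a b = 0 at this
  rw [PEquiv.toMatrix_toPEquiv_mul, PEquiv.mul_toMatrix_toPEquiv] at this
  simpa [hσa, hσb] using this

theorem scalar_of_conj (n : ℕ) (a b : Fin n) (hab : a ≠ b) (Y : Mat n)
    (h : ∀ g : GLn n, ((↑g : Mat n) * Y * (↑g⁻¹ : Mat n)) a b = 0) :
    Y = Y a a • (1 : Mat n) := by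
  have h0 := offdiag_zero n a b hab Y h
  have h1 : ∀ i j, i ≠ j → Y j j = Y i i := by
    intro i j hij
    let T : GLn n := ⟨Matrix.transvection i j 1, Matrix.transvection i j (-1), by
      rw [Matrix.transvection_mul_transvection_same _ _ hij]; simp, by
      rw [Matrix.transvection_mul_transvection_same _ _ hij]; simp⟩
    have := offdiag_zero n a b hab ((↑T : Mat n) * Y * (↑T⁻¹ : Mat n)) (fun g => by
      have := h (g * T)
      simpa [mul_assoc] using this) i j hij
    change ((Matrix.transvection i j 1 : Mat n) * Y * (Matrix.transvection i j (-1) : Mat n) : Mat n) i j = 0 at this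
    rw [Matrix.mul_transvection_apply_same, Matrix.transvection_mul_apply_same,
      Matrix.transvection_mul_apply_same, h0 i j hij, h0 j i hij.symm] at this
    linear_combination this
  ext i j
  by_cases hij : i = j
  · subst hij
    by_cases hia : i = a
    · subst hia; simp
    · simpa using h1 a i (Ne.symm hia)
  · simp [hij, h0 i j hij]

theorem zclosed_scalar (n : ℕ) (a : Fin n) :
    zclosed {X : Mat n | X.trace = 0 ∧ ∃ c : ℂ, X * X = c • (1 : Mat n)} := by
  refine ⟨{p | ∀ X : Mat n, (X.trace = 0 ∧ ∃ c : ℂ, X * X = c • (1 : Mat n)) →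
    MvPolynomial.eval (fun q => X q.1 q.2) p = 0}, ?_⟩
  ext X
  constructor
  · intro hX p hp
    exact hp X hX
  · intro hX
    refine ⟨?_, (X * X) a a, ?_⟩
    · have := hX (∑ i, MvPolynomial.X (i, i)) (by
        rintro Z ⟨hZ, -⟩
        simpa [Matrix.trace] using hZ)
      simpa [Matrix.trace] using this
    · ext i j
      have := hX ((∑ k, MvPolynomial.X (i, k) * MvPolynomial.X (k, j)) -
        (∑ k, MvPolynomial.X (a, k) * MvPolynomial.X (k, a)) *
          MvPolynomial.C ((1 : Mat n) i j)) (by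
        rintro Z ⟨-, c, hc⟩
        have e1 := congrFun (congrFun hc i) j
        have e2 := congrFun (congrFun hc a) a
        rw [Matrix.mul_apply] at e1 e2
        simp only [map_sub, map_sum, map_mul, MvPolynomial.eval_X, MvPolynomial.eval_C]
        rw [e1, e2]
        simp)
      simp only [map_sub, map_sum, map_mul, MvPolynomial.eval_X, MvPolynomial.eval_C] at this
      rw [Matrix.smul_apply, Matrix.mul_apply, Matrix.mul_apply]
      exact sub_eq_zero.1 this

theorem stmt_10 (m : ℕ) (hm : 2 ≤ m)
    -- `D = diag(1,…,1,−1,…,−1)` with `m` ones and `m` minus-ones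
    (D : Mat (2 * m))
    (hD : D = Matrix.diagonal fun i : Fin (2 * m) => if (i : ℕ) < m then (1 : ℂ) else -1)
    (S₁ S₂ S₃ S₄ : Set (Mat (2 * m)))
    (hS₁ : S₁ = {X | X.trace = 0 ∧ ∀ g : GLn (2 * m),
      ((↑g : Mat (2 * m)) * (X * X) * (↑g⁻¹ : Mat (2 * m)))
        ⟨2 * m - 1, by omega⟩ ⟨0, by omega⟩ = 0})
    (hS₂ : S₂ = {X | X.trace = 0 ∧ ∃ c : ℂ, X * X = c • (1 : Mat (2 * m))})
    (hS₃ : S₃ = zclosure {X | ∃ t : ℂ, t ≠ 0 ∧ ∃ g : GLn (2 * m),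
      X = t • ((↑g : Mat (2 * m)) * D * (↑g⁻¹ : Mat (2 * m)))})
    (hS₄ : S₄ = {X | ∃ t : ℂ, t ≠ 0 ∧ ∃ g : GLn (2 * m),
      X = t • ((↑g : Mat (2 * m)) * D * (↑g⁻¹ : Mat (2 * m)))} ∪
      {X | X.trace = 0 ∧ X * X = 0}) :
    S₁ = S₂ ∧ S₂ = S₃ ∧ S₃ = S₄ := by
  have hDD : D * D = 1 := by
    rw [hD, Matrix.diagonal_mul_diagonal, ← Matrix.diagonal_one]
    congr 1
    ext i
    split_ifs <;> simp
  have hDt : D.trace = 0 := by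
    rw [hD, Matrix.trace_diagonal]
    rw [← (finCongr (show m + m = 2 * m by omega)).sum_comp, Fin.sum_univ_add]
    simp
  have h12 : S₁ = S₂ := by
    rw [hS₁, hS₂]
    ext X
    refine and_congr_right fun _ => ⟨fun h => ⟨_, scalar_of_conj _ _ _ ?_ _ h⟩, ?_⟩
    · simp [Fin.ext_iff]; omega
    · rintro ⟨c, hc⟩ g
      rw [hc, Matrix.mul_smul, mul_one, Matrix.smul_mul, ← Units.val_mul, mul_inv_cancel]
      rw [Matrix.smul_apply, Units.val_one, Matrix.one_apply_ne, smul_zero]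
      rw [Ne, Fin.ext_iff]
      change ¬ (2 * m - 1 = 0)
      omega
  set cone : Set (Mat (2 * m)) := {X | ∃ t : ℂ, t ≠ 0 ∧ ∃ g : GLn (2 * m),
      X = t • ((↑g : Mat (2 * m)) * D * (↑g⁻¹ : Mat (2 * m)))} with hcone
  have hc2 : cone ⊆ S₂ := by
    rw [hS₂]
    rintro _ ⟨t, ht, g, rfl⟩
    refine ⟨?_, t * t, ?_⟩
    · rw [Matrix.trace_smul, Matrix.trace_mul_comm, ← mul_assoc, ← Units.val_mul,
        inv_mul_cancel]
      simp [hDt]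
    · have : (↑g : Mat (2 * m)) * D * (↑g⁻¹ : Mat (2 * m)) *
          ((↑g : Mat (2 * m)) * D * (↑g⁻¹ : Mat (2 * m))) = 1 := by
        calc _ = (↑g : Mat (2 * m)) * D * ((↑g⁻¹ : Mat (2 * m)) * (↑g : Mat (2 * m))) * D *
              (↑g⁻¹ : Mat (2 * m)) := by simp only [mul_assoc]
          _ = (↑g : Mat (2 * m)) * (D * D) * (↑g⁻¹ : Mat (2 * m)) := by
              rw [← Units.val_mul, inv_mul_cancel]; simp [mul_assoc]
          _ = 1 := by
              rw [hDD, mul_one, ← Units.val_mul, mul_inv_cancel]; simp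
      rw [Matrix.smul_mul, Matrix.mul_smul, this, smul_smul]
  have hmain : ∀ (X : Mat (2 * m)) (c : ℂ), c ≠ 0 → X.trace = 0 → X * X = c • 1 → X ∈ cone := by
    intro X c hc hX hXX
    obtain ⟨t, ht⟩ := IsAlgClosed.exists_eq_mul_self c
    have ht0 : t ≠ 0 := by
      rintro rfl
      simp at ht
      exact hc ht
    obtain ⟨g, hg⟩ := involution_conj m (t⁻¹ • X) (by
      rw [Matrix.smul_mul, Matrix.mul_smul, hXX, ht, smul_smul, smul_smul]
      field_simp
      simp) (by simp [hX])
    refine ⟨t, ht0, g, ?_⟩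
    rw [hD, ← hg, smul_smul, mul_inv_cancel₀ ht0, one_smul]
  have h24 : S₂ ⊆ S₄ := by
    rw [hS₂, hS₄]
    rintro X ⟨hX, c, hc⟩
    by_cases h0 : c = 0
    · right
      exact ⟨hX, by rw [hc, h0, zero_smul]⟩
    · left
      exact hmain X c h0 hX hc
  have h32 : S₃ ⊆ S₂ := by
    rw [hS₃]
    apply Set.sInter_subset_of_mem
    refine ⟨?_, hc2⟩
    rw [hS₂]
    exact zclosed_scalar _ ⟨0, by omega⟩
  have h43 : S₄ ⊆ S₃ := by
    rw [hS₃, hS₄]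
    rintro X (hX | ⟨hX, hXX⟩)
    · rintro C ⟨-, hC⟩
      exact hC hX
    · rintro C ⟨⟨T, rfl⟩, hC⟩ p hp
      obtain ⟨Y, hY, hYt, hXY⟩ := exists_anticomm m X hXX
      have hs : ∀ s : ℂ, s ≠ 0 →
          MvPolynomial.eval (fun q => (X + s • Y) q.1 q.2) p = 0 := by
        intro s hs
        refine hC (hmain (X + s • Y) (s * s) (mul_ne_zero hs hs) (by simp [hX, hYt]) ?_) p hp
        have : (X + s • Y) * (X + s • Y) = X * X + s • (X * Y + Y * X) + (s * s) • (Y * Y) := by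
          simp only [add_mul, mul_add, Matrix.smul_mul, Matrix.mul_smul, smul_smul, smul_add]
          abel
        rw [this, hXX, hXY, hY]
        simp
      have hcont : Continuous fun s : ℂ =>
          MvPolynomial.eval (fun q : Fin (2 * m) × Fin (2 * m) => (X + s • Y) q.1 q.2) p := by
        apply (MvPolynomial.continuous_eval p).comp
        refine continuous_pi fun q => ?_
        simp only [Matrix.add_apply, Matrix.smul_apply]
        fun_prop
      have := hcont.ext_on (dense_compl_singleton (0 : ℂ)) continuous_const
        (g := fun _ => (0 : ℂ)) (fun s h => hs s h)
      simpa using congrFun this 0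
  refine ⟨h12, ?_, ?_⟩
  · exact (h24.trans h43).antisymm h32
  · exact (h32.trans h24).antisymm h43
end
end
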